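/- Let φ be subharmonic on ℂ with Δφ a doubling measure, and ρ_φ the associated radius function. There exist a C^∞ subharmonic function ψ on ℂ and a constant C > 0 such that |ψ − φ| ≤ C on ℂ, Δψ is a doubling measure, Δψ is comparable to 1/ρ_ψ² and to 1/ρ_φ² (with uniform constants), and moreover |∇(Δψ)| ≲ 1/ρ_φ³. -/

import Mathlib

open MeasureTheory Metric Filter Set
open scoped ENNReal NNReal Real Topology Classical

noncomputable section

/-- The Laplacian of a function on `ℂ ≅ ℝ²`, computed via the second Fréchet derivative. -/
def lap (v : ℂ → ℝ) (z : ℂ) : ℝ :=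
  iteratedFDeriv ℝ 2 v z ![1, 1] + iteratedFDeriv ℝ 2 v z ![Complex.I, Complex.I]

/-- `μ` is a doubling measure on `ℂ` with doubling constant `C`. -/
def IsDoubling (μ : Measure ℂ) (C : ℝ≥0) : Prop :=
  ∀ z : ℂ, ∀ r : ℝ, 0 < r → μ (ball z (2 * r)) ≤ C * μ (ball z r)

/-- `φ` is a (continuous) subharmonic function whose distributional Laplacian is the
doubling measure `μ` (not identically zero).  The distributional identity is expressed
by testing against smooth compactly supported functions. -/
structure HasDoublingLaplacian (φ : ℂ → ℝ) (μ : Measure ℂ) : Prop where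
  continuous : Continuous φ
  lap_eq : ∀ v : ℂ → ℝ, ContDiff ℝ (⊤ : ℕ∞) v → HasCompactSupport v →
    ∫ z, φ z * lap v z = ∫ z, v z ∂μ
  doubling : ∃ C : ℝ≥0, 0 < C ∧ IsDoubling μ C
  ne_zero : μ ≠ 0

/-- `ρ` assigns to every `z` the positive radius such that the disk `D(z, ρ z)` has
`μ`-mass `1`. -/
def IsRadius (μ : Measure ℂ) (ρ : ℂ → ℝ) : Prop :=
  ∀ z : ℂ, 0 < ρ z ∧ μ (ball z (ρ z)) = 1

/-- The distance induced by the metric `ρ(z)⁻² dz⊗d\bar z`: infimum of lengths of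
`C¹` curves joining the two points. -/
def pathDist (ρ : ℂ → ℝ) (z ζ : ℂ) : ℝ :=
  sInf { L : ℝ | ∃ γ : ℝ → ℂ, γ 0 = z ∧ γ 1 = ζ ∧ ContDiff ℝ 1 γ ∧
    L = ∫ t in (0:ℝ)..1, ‖deriv γ t‖ / ρ (γ t) }

/-- The `pathDist` from a point to a set. -/
def pathDistSet (ρ : ℂ → ℝ) (z : ℂ) (Λ : Set ℂ) : ℝ :=
  ⨅ l : Λ, pathDist ρ z l.1

/-- A flat weight for `φ`: a positive measurable function whose logarithm has slow
growth with respect to the induced distance. -/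
def IsFlatWeight (ρ : ℂ → ℝ) (ω : ℂ → ℝ) : Prop :=
  (∀ z, 0 < ω z) ∧ Measurable ω ∧
  ∃ C : ℝ, 0 < C ∧ ∀ z ζ : ℂ,
    |Real.log (ω z) - Real.log (ω ζ)| ≤ C * (1 + max (Real.log (pathDist ρ z ζ)) 0)

/-- The norm of the space `F^p_{φ,ω}` (with `p = ∞` giving the weighted sup norm). -/
def Fnorm (p : ℝ≥0∞) (φ ω ρ : ℂ → ℝ) (f : ℂ → ℂ) : ℝ≥0∞ :=
  if p = ∞ then ⨆ z : ℂ, ENNReal.ofReal (ω z * ‖f z‖ * Real.exp (-φ z))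
  else (∫⁻ z, ENNReal.ofReal
      (‖f z‖ ^ p.toReal * Real.exp (-(p.toReal * φ z)) * ω z ^ p.toReal / ρ z ^ 2)) ^
      (1 / p.toReal)

/-- Membership in `F^p_{φ,ω}`: entire with finite norm. -/
def MemF (p : ℝ≥0∞) (φ ω ρ : ℂ → ℝ) (f : ℂ → ℂ) : Prop :=
  Differentiable ℂ f ∧ Fnorm p φ ω ρ f < ∞

/-- The norm of the sequence space `ℓ^p_{φ,ω}(Λ)`. -/
def lnorm (p : ℝ≥0∞) (φ ω : ℂ → ℝ) (Λ : Set ℂ) (v : ℂ → ℂ) : ℝ≥0∞ :=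
  if p = ∞ then ⨆ l : Λ, ENNReal.ofReal (ω l.1 * ‖v l.1‖ * Real.exp (-φ l.1))
  else (∑' l : Λ, ENNReal.ofReal
      (ω l.1 ^ p.toReal * ‖v l.1‖ ^ p.toReal * Real.exp (-(p.toReal * φ l.1)))) ^
      (1 / p.toReal)

/-- `Λ` is a sampling sequence for `F^p_{φ,ω}`. -/
def IsSampling (p : ℝ≥0∞) (φ ω ρ : ℂ → ℝ) (Λ : Set ℂ) : Prop :=
  if p = ∞ then
    ∃ C : ℝ≥0, 0 < C ∧ ∀ f : ℂ → ℂ, MemF ∞ φ ω ρ f →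
      Fnorm ∞ φ ω ρ f ≤ C * lnorm ∞ φ ω Λ f
  else
    ∃ C : ℝ≥0, 0 < C ∧ ∀ f : ℂ → ℂ, MemF p φ ω ρ f →
      (C : ℝ≥0∞)⁻¹ * lnorm p φ ω Λ f ≤ Fnorm p φ ω ρ f ∧
      Fnorm p φ ω ρ f ≤ C * lnorm p φ ω Λ f

/-- `Λ` is an interpolating sequence for `F^p_{φ,ω}`. -/
def IsInterpolating (p : ℝ≥0∞) (φ ω ρ : ℂ → ℝ) (Λ : Set ℂ) : Prop :=
  ∀ v : ℂ → ℂ, lnorm p φ ω Λ v < ∞ →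
    ∃ f : ℂ → ℂ, MemF p φ ω ρ f ∧ ∀ l ∈ Λ, f l = v l

/-- `Λ` is `ρ`-separated. -/
def RhoSeparated (ρ : ℂ → ℝ) (Λ : Set ℂ) : Prop :=
  ∃ δ : ℝ, 0 < δ ∧ ∀ l ∈ Λ, ∀ l' ∈ Λ, l ≠ l' → δ * max (ρ l) (ρ l') ≤ dist l l'

/-- `Λ` is a finite union of `ρ`-separated sequences. -/
def FiniteUnionSeparated (ρ : ℂ → ℝ) (Λ : Set ℂ) : Prop :=
  ∃ n : ℕ, ∃ Λs : Fin n → Set ℂ, Λ = ⋃ i, Λs i ∧ ∀ i, RhoSeparated ρ (Λs i)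

/-- Upper uniform density of `Λ` with respect to the doubling measure `μ`. -/
def upperUnifDensity (μ : Measure ℂ) (ρ : ℂ → ℝ) (Λ : Set ℂ) : ℝ≥0∞ :=
  limsup (fun r : ℝ =>
    ⨆ z : ℂ, Measure.count (Λ ∩ closedBall z (r * ρ z)) / μ (ball z (r * ρ z))) atTop

/-- Lower uniform density of `Λ` with respect to the doubling measure `μ`. -/
def lowerUnifDensity (μ : Measure ℂ) (ρ : ℂ → ℝ) (Λ : Set ℂ) : ℝ≥0∞ :=
  liminf (fun r : ℝ =>
    ⨅ z : ℂ, Measure.count (Λ ∩ closedBall z (r * ρ z)) / μ (ball z (r * ρ z))) atTop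

/-- The Cauchy–Riemann operator `∂̄` on `ℂ`-valued functions. -/
def dbar (v : ℂ → ℂ) (z : ℂ) : ℂ :=
  (fderiv ℝ v z 1 + Complex.I • fderiv ℝ v z Complex.I) / 2

/-- `∂̄ u = f` in the sense of distributions. -/
def IsDistribDbarOf (u f : ℂ → ℂ) : Prop :=
  ∀ v : ℂ → ℂ, ContDiff ℝ (⊤ : ℕ∞) v → HasCompactSupport v →
    ∫ z, f z * v z = - ∫ z, u z * dbar v z

/-- Closed axis-parallel rectangle with centre `a` and half-sides `s, t`. -/
def axisRect (a : ℂ) (s t : ℝ) : Set ℂ :=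
  {w : ℂ | |w.re - a.re| ≤ s ∧ |w.im - a.im| ≤ t}


/-! ### The profile -/

def prq (x : ℝ) : ℝ :=
  (1 - Real.smoothTransition (2 * x - 1)) + Real.smoothTransition (2 * x - 1) / x

lemma prq_of_le {x : ℝ} (hx : x ≤ 1/2) : prq x = 1 := by
  have : Real.smoothTransition (2 * x - 1) = 0 := Real.smoothTransition.zero_of_nonpos (by linarith)
  simp [prq, this]

lemma prq_of_ge {x : ℝ} (hx : 1 ≤ x) : prq x = x⁻¹ := by
  have : Real.smoothTransition (2 * x - 1) = 1 := Real.smoothTransition.one_of_one_le (by linarith)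
  simp [prq, this]

lemma prq_contDiff : ContDiff ℝ (⊤ : ℕ∞) prq := by
  rw [contDiff_iff_contDiffAt]
  intro x
  have hs : ContDiff ℝ (⊤ : ℕ∞) (fun x : ℝ => Real.smoothTransition (2 * x - 1)) :=
    Real.smoothTransition.contDiff.comp ((contDiff_const.mul contDiff_id).sub contDiff_const)
  rcases lt_or_ge x (1/2) with h | h
  · have : prq =ᶠ[𝓝 x] fun _ => (1:ℝ) := by
      filter_upwards [Iio_mem_nhds h] with y hy
      exact prq_of_le (le_of_lt hy)
    exact contDiffAt_const.congr_of_eventuallyEq this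
  · have hx : x ≠ 0 := by intro h0; rw [h0] at h; norm_num at h
    exact (contDiffAt_const.sub hs.contDiffAt).add (hs.contDiffAt.div contDiffAt_id hx)

def prl (x : ℝ) : ℝ := ∫ y in (1:ℝ)..x, prq y

lemma prl_hasDerivAt (x : ℝ) : HasDerivAt prl (prq x) x :=
  intervalIntegral.integral_hasDerivAt_right (prq_contDiff.continuous.intervalIntegrable _ _)
    (prq_contDiff.continuous.stronglyMeasurableAtFilter _ _) prq_contDiff.continuous.continuousAt

lemma prl_deriv : deriv prl = prq := funext fun x => (prl_hasDerivAt x).deriv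

lemma prl_contDiff : ContDiff ℝ (⊤ : ℕ∞) prl := by
  rw [contDiff_infty_iff_deriv, prl_deriv]
  exact ⟨fun x => (prl_hasDerivAt x).differentiableAt, prq_contDiff⟩

lemma prl_of_ge {x : ℝ} (hx : 1 ≤ x) : prl x = Real.log x := by
  have : prl x = ∫ y in (1:ℝ)..x, y⁻¹ := by
    refine intervalIntegral.integral_congr fun y hy => ?_
    rw [uIcc_of_le hx] at hy
    exact prq_of_ge hy.1
  rw [this, integral_inv_of_pos one_pos (by linarith)]
  simp

def prp (x : ℝ) : ℝ := prq x + x * deriv prq x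

lemma prq_deriv_contDiff : ContDiff ℝ (⊤ : ℕ∞) (deriv prq) :=
  (contDiff_infty_iff_deriv.1 prq_contDiff).2

lemma prp_contDiff : ContDiff ℝ (⊤ : ℕ∞) prp :=
  prq_contDiff.add (contDiff_id.mul prq_deriv_contDiff)

lemma prp_of_lt {x : ℝ} (hx : x < 1/2) : prp x = 1 := by
  have : prq =ᶠ[𝓝 x] fun _ => (1:ℝ) := by
    filter_upwards [Iio_mem_nhds hx] with y hy
    exact prq_of_le (le_of_lt hy)
  rw [prp, this.deriv_eq, prq_of_le hx.le]; simp

lemma prp_of_gt {x : ℝ} (hx : 1 < x) : prp x = 0 := by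
  have : prq =ᶠ[𝓝 x] fun y => y⁻¹ := by
    filter_upwards [Ioi_mem_nhds hx] with y hy
    exact prq_of_ge (le_of_lt hy)
  have hx0 : x ≠ 0 := by positivity
  rw [prp, this.deriv_eq, prq_of_ge hx.le, deriv_inv]
  field_simp; ring

lemma prp_of_ge {x : ℝ} (hx : 1 ≤ x) : prp x = 0 := by
  have h1 : closure (Ioi (1:ℝ)) ⊆ {x | prp x = 0} :=
    (isClosed_eq prp_contDiff.continuous continuous_const).closure_subset_iff.2
      (fun y hy => prp_of_gt hy)
  rw [closure_Ioi] at h1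
  exact h1 hx

lemma prp_nonneg (x : ℝ) : 0 ≤ prp x := by
  rcases lt_or_ge x (1/2) with h | h
  · rw [prp_of_lt h]; norm_num
  rcases lt_or_ge x 1 with h' | h'
  swap
  · rw [prp_of_ge h']
  have hx : x ≠ 0 := by intro h0; rw [h0] at h; norm_num at h
  have hsd : HasDerivAt (fun x : ℝ => Real.smoothTransition (2 * x - 1))
      (deriv (fun x : ℝ => Real.smoothTransition (2 * x - 1)) x) x := by
    have hs : ContDiff ℝ (⊤ : ℕ∞) (fun x : ℝ => Real.smoothTransition (2 * x - 1)) :=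
      Real.smoothTransition.contDiff.comp ((contDiff_const.mul contDiff_id).sub contDiff_const)
    exact (hs.differentiable (by simp) x).hasDerivAt
  have hd0 : 0 ≤ deriv (fun x : ℝ => Real.smoothTransition (2 * x - 1)) x := by
    refine Monotone.deriv_nonneg ?_
    intro a b hab
    exact Real.smoothTransition.monotone (by linarith)
  have hle := Real.smoothTransition.le_one (2 * x - 1)
  have hq : HasDerivAt prq _ x := (hsd.const_sub 1).add (hsd.div (hasDerivAt_id x) hx)
  rw [prp, hq.deriv, prq]
  set d := deriv (fun x : ℝ => Real.smoothTransition (2 * x - 1)) x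
  set s := Real.smoothTransition (2 * x - 1)
  have : 1 - s + s / x + x * (-d + (d * x - s * 1) / x ^ 2) = (1 - s) + d * (1 - x) := by
    field_simp; ring
  rw [this]
  have := mul_nonneg hd0 (sub_nonneg.2 h'.le)
  linarith

lemma prp_deriv_contDiff : ContDiff ℝ (⊤ : ℕ∞) (deriv prp) :=
  (contDiff_infty_iff_deriv.1 prp_contDiff).2

lemma prp_deriv_of_ge {x : ℝ} (hx : 1 ≤ x) : deriv prp x = 0 := by
  have h1 : closure (Ioi (1:ℝ)) ⊆ {x | deriv prp x = 0} := by
    refine (isClosed_eq prp_deriv_contDiff.continuous continuous_const).closure_subset_iff.2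
      (fun y hy => ?_)
    have : prp =ᶠ[𝓝 y] fun _ => (0:ℝ) := by
      filter_upwards [Ioi_mem_nhds hy] with z hz
      exact prp_of_gt hz
    simp [this.deriv_eq]
  rw [closure_Ioi] at h1
  exact h1 hx

lemma profile_bound : ∃ M : ℝ, 1 ≤ M ∧ (∀ x, 0 ≤ x → x ≤ 1 → |prl x| ≤ M) ∧
    (∀ x, 0 ≤ x → prp x ≤ M) ∧ (∀ x, 0 ≤ x → |deriv prp x| ≤ M) := by
  obtain ⟨M1, h1⟩ := (isCompact_Icc (a := (0:ℝ)) (b := 1)).exists_bound_of_continuousOn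
    prl_contDiff.continuous.continuousOn
  obtain ⟨M2, h2⟩ := (isCompact_Icc (a := (0:ℝ)) (b := 1)).exists_bound_of_continuousOn
    prp_contDiff.continuous.continuousOn
  obtain ⟨M3, h3⟩ := (isCompact_Icc (a := (0:ℝ)) (b := 1)).exists_bound_of_continuousOn
    prp_deriv_contDiff.continuous.continuousOn
  refine ⟨max 1 (max M1 (max M2 M3)), le_max_left _ _, ?_, ?_, ?_⟩
  · intro x h0 h1'
    exact (h1 x ⟨h0, h1'⟩).trans (by simp)
  · intro x h0
    rcases le_total x 1 with h | h
    · exact (le_abs_self _).trans ((h2 x ⟨h0, h⟩).trans (by simp))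
    · rw [prp_of_ge h]; exact le_trans zero_le_one (le_max_left _ _)
  · intro x h0
    rcases le_total x 1 with h | h
    · exact ((h3 x ⟨h0, h⟩).trans (by simp))
    · rw [prp_deriv_of_ge h, abs_zero]; exact le_trans zero_le_one (le_max_left _ _)

/-! ### Smoothness of parametric integrals -/

def SuppCond {F : Type} [NormedAddCommGroup F] (u : ℂ → ℝ) (k : ℝ × ℂ → F) : Prop :=
  ∀ z₀ : ℂ, ∃ r : ℝ, 0 < r ∧ ∃ R : ℝ, ∀ z ∈ ball z₀ r, ∀ ζ, ζ ∉ closedBall (0:ℂ) R →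
    k (u ζ, z - ζ) = 0

def kder {F : Type} [NormedAddCommGroup F] [NormedSpace ℝ F] (k : ℝ × ℂ → F) (x : ℝ × ℂ) :
    ℂ →L[ℝ] F := (fderiv ℝ k x).comp (ContinuousLinearMap.inr ℝ ℝ ℂ)

lemma kder_contDiff {F : Type} [NormedAddCommGroup F] [NormedSpace ℝ F] {k : ℝ × ℂ → F}
    (hk : ContDiff ℝ (⊤ : ℕ∞) k) : ContDiff ℝ (⊤ : ℕ∞) (kder k) := by
  have := (contDiff_infty_iff_fderiv.1 hk).2
  exact this.clm_comp contDiff_const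

lemma kder_hasFDerivAt {F : Type} [NormedAddCommGroup F] [NormedSpace ℝ F] {k : ℝ × ℂ → F}
    (hk : ContDiff ℝ (⊤ : ℕ∞) k) (a : ℝ) (ζ z : ℂ) :
    HasFDerivAt (fun z => k (a, z - ζ)) (kder k (a, z - ζ)) z := by
  have h1 : HasFDerivAt k (fderiv ℝ k (a, z - ζ)) (a, z - ζ) :=
    (hk.differentiable (by simp) _).hasFDerivAt
  have h2 : HasFDerivAt (fun z : ℂ => (a, z - ζ)) (ContinuousLinearMap.inr ℝ ℝ ℂ) z := by
    have := (hasFDerivAt_const (𝕜 := ℝ) a z).prodMk ((hasFDerivAt_id (𝕜 := ℝ) z).sub_const ζ)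
    convert! this using 1
  exact h1.comp z h2

lemma SuppCond.kder {F : Type} [NormedAddCommGroup F] [NormedSpace ℝ F] {k : ℝ × ℂ → F}
    {u : ℂ → ℝ} (hk : ContDiff ℝ (⊤ : ℕ∞) k) (h : SuppCond u k) : SuppCond u (kder k) := by
  intro z₀
  obtain ⟨r, hr, R, hR⟩ := h z₀
  refine ⟨r, hr, R, fun z hz ζ hζ => ?_⟩
  have h1 := kder_hasFDerivAt hk (u ζ) ζ z
  have h2 : (fun z => k (u ζ, z - ζ)) =ᶠ[𝓝 z] fun _ => 0 := by
    filter_upwards [isOpen_ball.mem_nhds hz] with y hy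
    exact hR y hy ζ hζ
  have h3 := (hasFDerivAt_const (𝕜 := ℝ) (0:F) z).congr_of_eventuallyEq h2
  exact h1.unique h3

lemma supp_integrable {F : Type} [NormedAddCommGroup F] [NormedSpace ℝ F] {k : ℝ × ℂ → F}
    {u g : ℂ → ℝ} {μ : Measure ℂ} [IsFiniteMeasureOnCompacts μ]
    (hk : Continuous k) (hu : Continuous u) (hg : Continuous g)
    (hs : SuppCond u k) (z : ℂ) : Integrable (fun ζ => g ζ • k (u ζ, z - ζ)) μ := by
  obtain ⟨r, hr, R, hR⟩ := hs z
  refine Continuous.integrable_of_hasCompactSupport (by fun_prop) ?_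
  refine HasCompactSupport.intro (isCompact_closedBall (0:ℂ) R) fun ζ hζ => ?_
  rw [hR z (mem_ball_self hr) ζ hζ, smul_zero]

lemma param_hasFDerivAt {F : Type} [NormedAddCommGroup F] [NormedSpace ℝ F] {k : ℝ × ℂ → F}
    {u g : ℂ → ℝ} {μ : Measure ℂ} [IsFiniteMeasureOnCompacts μ]
    (hk : ContDiff ℝ (⊤ : ℕ∞) k) (hu : Continuous u) (hg : Continuous g)
    (hs : SuppCond u k) (z₀ : ℂ) :
    HasFDerivAt (fun z => ∫ ζ, g ζ • k (u ζ, z - ζ) ∂μ)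
      (∫ ζ, g ζ • kder k (u ζ, z₀ - ζ) ∂μ) z₀ := by
  have hk' := kder_contDiff hk
  have hkc := hk.continuous
  have hkc' := hk'.continuous
  obtain ⟨r, hr, R, hR⟩ := hs.kder hk z₀
  have hcpt : IsCompact (closedBall z₀ (r/2) ×ˢ closedBall (0:ℂ) R) :=
    (isCompact_closedBall _ _).prod (isCompact_closedBall _ _)
  obtain ⟨M, hM⟩ := hcpt.exists_bound_of_continuousOn
    (f := fun p : ℂ × ℂ => g p.2 • kder k (u p.2, p.1 - p.2)) (by fun_prop)
  refine hasFDerivAt_integral_of_dominated_of_fderiv_le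
    (F' := fun z ζ => g ζ • kder k (u ζ, z - ζ))
    (bound := (closedBall (0:ℂ) R).indicator fun _ => M)
    (ball_mem_nhds z₀ (half_pos hr)) ?_ ?_ ?_ ?_ ?_ ?_
  · exact Eventually.of_forall fun z => (supp_integrable hkc hu hg hs z).aestronglyMeasurable
  · exact supp_integrable hkc hu hg hs z₀
  · exact (supp_integrable hkc' hu hg (hs.kder hk) z₀).aestronglyMeasurable
  · refine Eventually.of_forall fun ζ z hz => ?_
    by_cases hζ : ζ ∈ closedBall (0:ℂ) R
    · rw [indicator_of_mem hζ]
      exact hM (z, ζ) ⟨ball_subset_closedBall hz, hζ⟩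
    · rw [indicator_of_notMem hζ, hR z (ball_subset_ball (by linarith) hz) ζ hζ]
      simp
  · refine IntegrableOn.integrable_indicator ?_ measurableSet_closedBall
    exact integrableOn_const (isCompact_closedBall _ _).measure_lt_top.ne
  · exact Eventually.of_forall fun ζ z hz => (kder_hasFDerivAt hk _ _ _).const_smul _

lemma param_contDiff_nat (n : ℕ) {u g : ℂ → ℝ} {μ : Measure ℂ} [IsFiniteMeasureOnCompacts μ]
    (hu : Continuous u) (hg : Continuous g) :
    ∀ {F : Type} [NormedAddCommGroup F] [NormedSpace ℝ F] {k : ℝ × ℂ → F}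
    (_ : ContDiff ℝ (⊤ : ℕ∞) k) (_ : SuppCond u k),
    ContDiff ℝ n (fun z => ∫ ζ, g ζ • k (u ζ, z - ζ) ∂μ) := by
  induction n with
  | zero =>
    intro F _ _ k hk hs
    refine contDiff_zero.2 ?_
    exact continuous_iff_continuousAt.2 fun z => (param_hasFDerivAt hk hu hg hs z).continuousAt
  | succ n ih =>
    intro F _ _ k hk hs
    push_cast
    rw [contDiff_succ_iff_hasFDerivAt]
    exact ⟨_, ih (kder_contDiff hk) (hs.kder hk), fun z => param_hasFDerivAt hk hu hg hs z⟩

lemma param_contDiff {u g : ℂ → ℝ} {μ : Measure ℂ} [IsFiniteMeasureOnCompacts μ]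
    (hu : Continuous u) (hg : Continuous g)
    {F : Type} [NormedAddCommGroup F] [NormedSpace ℝ F] {k : ℝ × ℂ → F}
    (hk : ContDiff ℝ (⊤ : ℕ∞) k) (hs : SuppCond u k) :
    ContDiff ℝ (⊤ : ℕ∞) (fun z => ∫ ζ, g ζ • k (u ζ, z - ζ) ∂μ) :=
  contDiff_infty.2 fun n => param_contDiff_nat n hu hg hk hs

lemma lap_eq_fderiv (f : ℂ → ℝ) (z : ℂ) :
    lap f z = fderiv ℝ (fderiv ℝ f) z 1 1 + fderiv ℝ (fderiv ℝ f) z Complex.I Complex.I := by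
  simp [lap, iteratedFDeriv_two_apply]

lemma param_lap {u g : ℂ → ℝ} {μ : Measure ℂ} [IsFiniteMeasureOnCompacts μ]
    (hu : Continuous u) (hg : Continuous g) {k : ℝ × ℂ → ℝ}
    (hk : ContDiff ℝ (⊤ : ℕ∞) k) (hs : SuppCond u k) (z : ℂ) :
    lap (fun z => ∫ ζ, g ζ • k (u ζ, z - ζ) ∂μ) z =
      ∫ ζ, g ζ * lap (fun z => k (u ζ, z - ζ)) z ∂μ := by
  have h1 : fderiv ℝ (fun z => ∫ ζ, g ζ • k (u ζ, z - ζ) ∂μ) =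
      fun z => ∫ ζ, g ζ • kder k (u ζ, z - ζ) ∂μ :=
    funext fun z => (param_hasFDerivAt hk hu hg hs z).fderiv
  have h2 := (param_hasFDerivAt (μ := μ) (kder_contDiff hk) hu hg (hs.kder hk) z).fderiv
  have hIntg := supp_integrable (μ := μ) (kder_contDiff (kder_contDiff hk)).continuous hu hg
    ((hs.kder hk).kder (kder_contDiff hk)) z
  have h3 : ∀ ζ, lap (fun z => k (u ζ, z - ζ)) z =
      kder (kder k) (u ζ, z - ζ) 1 1 + kder (kder k) (u ζ, z - ζ) Complex.I Complex.I := by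
    intro ζ
    have e1 : fderiv ℝ (fun z => k (u ζ, z - ζ)) = fun z => kder k (u ζ, z - ζ) :=
      funext fun z => (kder_hasFDerivAt hk _ _ z).fderiv
    rw [lap_eq_fderiv, e1, (kder_hasFDerivAt (kder_contDiff hk) _ _ z).fderiv]
  have hap : ∀ v : ℂ, (∫ ζ, g ζ • kder (kder k) (u ζ, z - ζ) ∂μ) v v =
      ∫ ζ, g ζ * kder (kder k) (u ζ, z - ζ) v v ∂μ := by
    intro v
    rw [ContinuousLinearMap.integral_apply hIntg,
      ContinuousLinearMap.integral_apply (hIntg.apply_continuousLinearMap v)]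
    rfl
  have hi : ∀ v : ℂ, Integrable (fun ζ => g ζ * kder (kder k) (u ζ, z - ζ) v v) μ := by
    intro v
    exact (hIntg.apply_continuousLinearMap v).apply_continuousLinearMap v
  rw [lap_eq_fderiv, h1, h2, hap, hap, ← integral_add (hi _) (hi _)]
  refine integral_congr_ae (Eventually.of_forall fun ζ => ?_)
  simp only [h3]; ring

/-! ### Radial Laplacians -/

lemma hasFDerivAt_normSq (z w : ℂ) : HasFDerivAt (fun ζ : ℂ => ‖ζ - z‖ ^ 2)
    (2 • (innerSL ℝ (w - z))) w := by
  simpa using ((hasFDerivAt_id (𝕜 := ℝ) w).sub_const z).norm_sq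

lemma contDiff_normSq (z : ℂ) : ContDiff ℝ (⊤ : ℕ∞) (fun ζ : ℂ => ‖ζ - z‖ ^ 2) :=
  (contDiff_id.sub contDiff_const).norm_sq ℝ

lemma radial_hasFDerivAt {g : ℝ → ℝ} (hg : Differentiable ℝ g) (z w : ℂ) :
    HasFDerivAt (fun ζ : ℂ => g (‖ζ - z‖ ^ 2))
      ((2 * deriv g (‖w - z‖ ^ 2)) • (innerSL ℝ (w - z))) w := by
  have := (hg (‖w - z‖ ^ 2)).hasDerivAt.comp_hasFDerivAt w (hasFDerivAt_normSq z w)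
  convert! this using 1
  rw [mul_comm, mul_smul, ofNat_smul_eq_nsmul]

lemma lap_radial {g : ℝ → ℝ} (hg : ContDiff ℝ (⊤ : ℕ∞) g) (z w : ℂ) :
    lap (fun ζ : ℂ => g (‖ζ - z‖ ^ 2)) w =
      4 * (deriv g (‖w - z‖ ^ 2) + ‖w - z‖ ^ 2 * deriv (deriv g) (‖w - z‖ ^ 2)) := by
  have hg' := (contDiff_infty_iff_deriv.1 hg).2
  have hd : Differentiable ℝ g := hg.differentiable (by simp)
  have hd' : Differentiable ℝ (deriv g) := hg'.differentiable (by simp)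
  have h1 : fderiv ℝ (fun ζ : ℂ => g (‖ζ - z‖ ^ 2)) =
      fun w => (2 * deriv g (‖w - z‖ ^ 2)) • (innerSL ℝ (w - z)) :=
    funext fun w => (radial_hasFDerivAt hd z w).fderiv
  have h2 : HasFDerivAt (fun w : ℂ => innerSL ℝ (w - z)) (innerSL ℝ : ℂ →L[ℝ] ℂ →L[ℝ] ℝ) w := by
    have := (innerSL ℝ : ℂ →L[ℝ] ℂ →L[ℝ] ℝ).hasFDerivAt.comp w
      ((hasFDerivAt_id (𝕜 := ℝ) w).sub_const z)
    convert! this using 1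
  have h3 := ((radial_hasFDerivAt hd' z w).const_mul 2).smul h2
  have h4 : fderiv ℝ (fun w : ℂ => (2 * deriv g (‖w - z‖ ^ 2)) • (innerSL ℝ (w - z))) w = _ :=
    h3.fderiv
  rw [lap_eq_fderiv, h1, h4]
  have e : ‖w - z‖ ^ 2 = (w - z).re ^ 2 + (w - z).im ^ 2 := by
    rw [Complex.sq_norm, Complex.normSq_apply]; ring
  simp [innerSL_apply_apply, Complex.inner]
  have i1 : (innerSL ℝ : ℂ →L[ℝ] ℂ →L[ℝ] ℝ) 1 1 = 1 := by rw [innerSL_apply_apply]; simp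
  have i2 : (innerSL ℝ : ℂ →L[ℝ] ℂ →L[ℝ] ℝ) Complex.I Complex.I = 1 := by
    rw [innerSL_apply_apply]; simp
  erw [i1, i2]
  rw [e]; simp; ring

/-! ### Doubling measures -/

lemma doubling_pow {μ : Measure ℂ} {C : ℝ≥0} (hC : IsDoubling μ C) (z : ℂ) {r : ℝ} (hr : 0 < r)
    (n : ℕ) : μ (ball z (2 ^ n * r)) ≤ (C : ℝ≥0∞) ^ n * μ (ball z r) := by
  induction n with
  | zero => simp
  | succ n ih =>
    have h := hC z (2 ^ n * r) (by positivity)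
    rw [show (2:ℝ) ^ (n+1) * r = 2 * (2 ^ n * r) by ring]
    refine h.trans ?_
    rw [pow_succ', mul_assoc]
    gcongr

lemma exists_pow_scale {a b : ℝ} (ha : 0 < a) : ∃ n : ℕ, b ≤ 2 ^ n * a := by
  obtain ⟨n, hn⟩ := pow_unbounded_of_one_lt (b / a) (by norm_num : (1:ℝ) < 2)
  exact ⟨n, by rw [div_lt_iff₀ ha] at hn; exact hn.le⟩

lemma ball_finite {μ : Measure ℂ} {C : ℝ≥0} (hC : IsDoubling μ C) {ρ : ℂ → ℝ}
    (hρ : IsRadius μ ρ) (z : ℂ) (r : ℝ) : μ (ball z r) < ∞ := by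
  obtain ⟨n, hn⟩ := exists_pow_scale (b := r) (hρ z).1
  refine (measure_mono (ball_subset_ball hn)).trans_lt ?_
  refine (doubling_pow hC z (hρ z).1 n).trans_lt ?_
  rw [(hρ z).2, mul_one]
  exact ENNReal.pow_lt_top ENNReal.coe_lt_top

lemma ball_pos {μ : Measure ℂ} {C : ℝ≥0} (hC : IsDoubling μ C) {ρ : ℂ → ℝ}
    (hρ : IsRadius μ ρ) (z : ℂ) {r : ℝ} (hr : 0 < r) : 0 < μ (ball z r) := by
  obtain ⟨n, hn⟩ := exists_pow_scale (b := ρ z) hr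
  have h1 : 1 ≤ (C : ℝ≥0∞) ^ n * μ (ball z r) := by
    rw [← (hρ z).2]
    exact (measure_mono (ball_subset_ball hn)).trans (doubling_pow hC z hr n)
  by_contra h
  have h0 : μ (ball z r) = 0 := by simpa using h
  rw [h0, mul_zero] at h1
  simp at h1

/-- The package of real-valued facts used below. -/
structure Good (μ : Measure ℂ) (ρ : ℂ → ℝ) (D : ℝ) : Prop where
  one_le : 1 ≤ D
  fin : ∀ z r, μ (ball z r) < ∞
  pos : ∀ z r, 0 < r → 0 < μ.real (ball z r)
  dbl : ∀ z r, 0 < r → μ.real (ball z (2 * r)) ≤ D * μ.real (ball z r)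
  rpos : ∀ z, 0 < ρ z
  rone : ∀ z, μ.real (ball z (ρ z)) = 1

lemma exists_good {μ : Measure ℂ} {C : ℝ≥0} (hC : IsDoubling μ C) {ρ : ℂ → ℝ}
    (hρ : IsRadius μ ρ) : ∃ D, Good μ ρ D := by
  refine ⟨max 1 C, le_max_left _ _, ball_finite hC hρ, ?_, ?_, fun z => (hρ z).1, ?_⟩
  · intro z r hr
    exact ENNReal.toReal_pos (ball_pos hC hρ z hr).ne' (ball_finite hC hρ z r).ne
  · intro z r hr
    have h := ENNReal.toReal_mono
      (ENNReal.mul_ne_top ENNReal.coe_ne_top (ball_finite hC hρ z r).ne) (hC z r hr)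
    rw [ENNReal.toReal_mul, ENNReal.coe_toReal] at h
    refine h.trans ?_
    exact mul_le_mul_of_nonneg_right (le_max_right _ _) ENNReal.toReal_nonneg
  · intro z
    simp [Measure.real, (hρ z).2]

namespace Good

variable {μ : Measure ℂ} {ρ : ℂ → ℝ} {D : ℝ}

lemma finC (h : Good μ ρ D) : IsFiniteMeasureOnCompacts μ := by
  refine ⟨fun K hK => ?_⟩
  obtain ⟨r, hr⟩ := hK.isBounded.subset_ball (0:ℂ)
  exact (measure_mono hr).trans_lt (h.fin _ _)

lemma mono (h : Good μ ρ D) {z : ℂ} {r : ℝ} {s : Set ℂ} (hs : s ⊆ ball z r) :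
    μ.real s ≤ μ.real (ball z r) :=
  measureReal_mono hs (h.fin z r).ne

lemma dbl_pow (h : Good μ ρ D) (z : ℂ) {r : ℝ} (hr : 0 < r) (n : ℕ) :
    μ.real (ball z (2 ^ n * r)) ≤ D ^ n * μ.real (ball z r) := by
  induction n with
  | zero => simp
  | succ n ih =>
    have h' := h.dbl z (2 ^ n * r) (by positivity)
    rw [show (2:ℝ) ^ (n+1) * r = 2 * (2 ^ n * r) by ring]
    refine h'.trans ?_
    rw [pow_succ', mul_assoc]
    exact mul_le_mul_of_nonneg_left ih (by linarith [h.one_le])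

/-- an annulus contains a ball -/
lemma annulus (h : Good μ ρ D) (z : ℂ) {a b : ℝ} (ha : 0 < a) (hab : a < b) :
    μ.real (ball z a) + μ.real (ball (z + ((a + b) / 2 : ℝ)) ((b - a) / 2)) ≤
      μ.real (ball z b) := by
  have hd : Disjoint (ball z a) (ball (z + ((a + b) / 2 : ℝ)) ((b - a) / 2)) := by
    refine ball_disjoint_ball ?_
    rw [dist_self_add_right, Complex.norm_real, Real.norm_of_nonneg (by linarith)]
    linarith
  rw [← measureReal_union hd measurableSet_ball (h.fin _ _).ne (h.fin _ _).ne]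
  refine h.mono (union_subset (ball_subset_ball hab.le) (ball_subset_ball' ?_))
  rw [dist_self_add_left, Complex.norm_real, Real.norm_of_nonneg (by linarith)]
  linarith

lemma reverse (h : Good μ ρ D) (z : ℂ) {r : ℝ} (hr : 0 < r) :
    μ.real (ball z (r / 2)) ≤ (1 - 1 / D ^ 3) * μ.real (ball z r) := by
  have hD := h.one_le
  have h1 := h.annulus z (half_pos hr) (half_lt_self hr)
  have e : (r - r / 2) / 2 = r / 4 := by ring
  rw [e] at h1
  set c : ℂ := z + ((r / 2 + r) / 2 : ℝ) with hc
  have h2 := h.dbl_pow c (show 0 < r / 4 by positivity) 3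
  have h3 : μ.real (ball z r) ≤ μ.real (ball c (2 ^ 3 * (r / 4))) := by
    refine h.mono (ball_subset_ball' ?_)
    rw [hc, dist_self_add_right, Complex.norm_real, Real.norm_of_nonneg (by linarith)]
    linarith
  have h4 : 1 / D ^ 3 * μ.real (ball z r) ≤ μ.real (ball c (r / 4)) := by
    rw [one_div, inv_mul_le_iff₀ (by positivity)]
    exact h3.trans h2
  linarith

lemma theta_nonneg (h : Good μ ρ D) : 0 ≤ 1 - 1 / D ^ 3 := by
  have hD := h.one_le
  have : 1 / D ^ 3 ≤ 1 := by
    rw [div_le_one (by positivity)]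
    exact one_le_pow₀ hD
  linarith

lemma theta_lt (h : Good μ ρ D) : 1 - 1 / D ^ 3 < 1 := by
  have hD := h.one_le
  have : 0 < 1 / D ^ 3 := by positivity
  linarith

lemma reverse_pow (h : Good μ ρ D) (z : ℂ) {r : ℝ} (hr : 0 < r) (n : ℕ) :
    μ.real (ball z (r / 2 ^ n)) ≤ (1 - 1 / D ^ 3) ^ n * μ.real (ball z r) := by
  induction n with
  | zero => simp
  | succ n ih =>
    have h' := h.reverse z (show 0 < r / 2 ^ n by positivity)
    rw [show r / 2 ^ (n+1) = r / 2 ^ n / 2 by rw [pow_succ]; field_simp]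
    refine h'.trans ?_
    rw [pow_succ' (1 - 1 / D ^ 3) n, mul_assoc]
    exact mul_le_mul_of_nonneg_left ih h.theta_nonneg

lemma le_rho (h : Good μ ρ D) {z : ℂ} {r : ℝ} (hr : μ.real (ball z r) ≤ 1) : r ≤ ρ z := by
  by_contra hlt
  push Not at hlt
  have h1 := h.annulus z (h.rpos z) hlt
  have h2 := h.pos (z + ((ρ z + r) / 2 : ℝ)) ((r - ρ z) / 2) (by linarith)
  rw [h.rone] at h1
  linarith

lemma rho_le (h : Good μ ρ D) (z w : ℂ) : ρ w ≤ ρ z + ‖z - w‖ := by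
  have : ρ w - ‖z - w‖ ≤ ρ z := by
    apply h.le_rho
    rw [← h.rone w]
    refine h.mono (ball_subset_ball' ?_)
    rw [dist_eq_norm]; linarith
  linarith

lemma rho_continuous (h : Good μ ρ D) : Continuous ρ := by
  refine (LipschitzWith.of_dist_le_mul (K := 1) fun z w => ?_).continuous
  rw [Real.dist_eq, dist_eq_norm, abs_le]
  have h1 := h.rho_le z w
  have h2 := h.rho_le w z
  rw [norm_sub_rev] at h2
  constructor <;> simp <;> linarith

lemma large (h : Good μ ρ D) (z : ℂ) : ∃ r, 0 < r ∧ 1 < μ.real (ball z r) := by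
  refine ⟨2 * ρ z, by linarith [h.rpos z], ?_⟩
  have h1 := h.annulus z (h.rpos z) (show ρ z < 2 * ρ z by linarith [h.rpos z])
  have h2 := h.pos (z + ((ρ z + 2 * ρ z) / 2 : ℝ)) ((2 * ρ z - ρ z) / 2) (by linarith [h.rpos z])
  rw [h.rone] at h1
  linarith

lemma log_pointwise {R d s : ℝ} (hR : 0 < R) (hd : 0 ≤ d) (_hs : 0 < s) :
    ENNReal.ofReal (Real.log (R / max d s)) ≤
      ∑' k : ℕ, (if d < R / 2 ^ k then (1:ℝ≥0∞) else 0) := by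
  rcases hd.eq_or_lt with h0 | hd
  · have : ∀ k : ℕ, (if d < R / 2 ^ k then (1:ℝ≥0∞) else 0) = 1 := by
      intro k
      rw [if_pos]; rw [← h0]; positivity
    simp only [this, ENNReal.tsum_const_eq_top_of_ne_zero one_ne_zero]
    exact le_top
  have hex : ∃ n : ℕ, R / 2 ^ n ≤ d := by
    obtain ⟨n, hn⟩ := exists_pow_scale (b := R) hd
    exact ⟨n, by rw [div_le_iff₀ (by positivity)]; linarith⟩
  set n := Nat.find hex with hn
  have h1 : R / 2 ^ n ≤ d := Nat.find_spec hex
  have h2 : ∀ k ∈ Finset.range n, (if d < R / 2 ^ k then (1:ℝ≥0∞) else 0) = 1 := by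
    intro k hk
    rw [if_pos]
    exact not_le.1 (Nat.find_min hex (Finset.mem_range.1 hk))
  refine le_trans ?_ (ENNReal.sum_le_tsum (Finset.range n))
  rw [Finset.sum_congr rfl h2]
  simp only [Finset.sum_const, Finset.card_range, nsmul_eq_mul, mul_one]
  rw [ENNReal.ofReal_le_iff_le_toReal (by simp)]
  simp only [ENNReal.toReal_natCast]
  have h3 : R / max d s ≤ 2 ^ n := by
    have : R / max d s ≤ R / d := by gcongr; exact le_max_left _ _
    refine this.trans ?_
    rw [div_le_iff₀ (by positivity)] at h1 ⊢
    linarith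
  calc Real.log (R / max d s) ≤ Real.log (2 ^ n) := Real.log_le_log (by positivity) h3
    _ = n * Real.log 2 := by rw [Real.log_pow]
    _ ≤ n * 1 := by
        gcongr
        linarith [Real.log_two_lt_d9]
    _ = n := mul_one _

lemma log_integral (h : Good μ ρ D) (z : ℂ) {s : ℝ} (hs : 0 < s) :
    ∫⁻ ζ, ENNReal.ofReal (Real.log (ρ z / max ‖z - ζ‖ s)) ∂μ ≤ ENNReal.ofReal (D ^ 3) := by
  have hD := h.one_le
  have hm : ∀ k : ℕ, (fun ζ => if ‖z - ζ‖ < ρ z / 2 ^ k then (1:ℝ≥0∞) else 0) =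
      (ball z (ρ z / 2 ^ k)).indicator 1 := by
    intro k; ext ζ
    simp only [indicator, mem_ball, dist_eq_norm, norm_sub_rev ζ z, Pi.one_apply]
  calc ∫⁻ ζ, ENNReal.ofReal (Real.log (ρ z / max ‖z - ζ‖ s)) ∂μ
      ≤ ∫⁻ ζ, ∑' k : ℕ, (if ‖z - ζ‖ < ρ z / 2 ^ k then (1:ℝ≥0∞) else 0) ∂μ :=
        lintegral_mono fun ζ => log_pointwise (h.rpos z) (norm_nonneg _) hs
    _ = ∑' k : ℕ, ∫⁻ ζ, (if ‖z - ζ‖ < ρ z / 2 ^ k then (1:ℝ≥0∞) else 0) ∂μ := by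
        refine lintegral_tsum fun k => ?_
        rw [hm k]
        exact (measurable_one.indicator measurableSet_ball).aemeasurable
    _ = ∑' k : ℕ, μ (ball z (ρ z / 2 ^ k)) := by
        congr 1; ext k
        rw [hm k, lintegral_indicator_one measurableSet_ball]
    _ ≤ ∑' k : ℕ, ENNReal.ofReal ((1 - 1 / D ^ 3) ^ k) := by
        refine ENNReal.tsum_le_tsum fun k => ?_
        rw [ENNReal.le_ofReal_iff_toReal_le (h.fin _ _).ne (pow_nonneg h.theta_nonneg k)]
        have := h.reverse_pow z (h.rpos z) k
        rwa [h.rone, mul_one] at this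
    _ = ENNReal.ofReal (∑' k : ℕ, (1 - 1 / D ^ 3) ^ k) :=
        (ENNReal.ofReal_tsum_of_nonneg (fun k => pow_nonneg h.theta_nonneg k)
          (summable_geometric_of_lt_one h.theta_nonneg h.theta_lt)).symm
    _ = ENNReal.ofReal (D ^ 3) := by
        rw [tsum_geometric_of_lt_one h.theta_nonneg h.theta_lt]
        congr 1
        field_simp
        ring

end Good

/-! ### Kernels -/

def kE (x : ℝ × ℂ) : ℝ := (1/2) * (prl (Real.exp x.1 * ‖x.2‖ ^ 2) - x.1)

def kT (x : ℝ × ℂ) : ℝ := 2 * Real.exp x.1 * prp (Real.exp x.1 * ‖x.2‖ ^ 2)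

lemma kE_contDiff : ContDiff ℝ (⊤ : ℕ∞) kE := by
  have h1 : ContDiff ℝ (⊤ : ℕ∞) fun x : ℝ × ℂ => Real.exp x.1 * ‖x.2‖ ^ 2 :=
    (Real.contDiff_exp.comp contDiff_fst).mul (contDiff_snd.norm_sq ℝ)
  exact contDiff_const.mul ((prl_contDiff.comp h1).sub contDiff_fst)

lemma kT_contDiff : ContDiff ℝ (⊤ : ℕ∞) kT := by
  have h1 : ContDiff ℝ (⊤ : ℕ∞) fun x : ℝ × ℂ => Real.exp x.1 * ‖x.2‖ ^ 2 :=
    (Real.contDiff_exp.comp contDiff_fst).mul (contDiff_snd.norm_sq ℝ)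
  exact (contDiff_const.mul (Real.contDiff_exp.comp contDiff_fst)).mul (prp_contDiff.comp h1)

lemma kE_far {u : ℝ} {w : ℂ} (h : 1 ≤ Real.exp u * ‖w‖ ^ 2) : kE (u, w) = Real.log ‖w‖ := by
  have hw : ‖w‖ ≠ 0 := by
    intro h0; rw [h0] at h; norm_num at h
  simp only [kE]
  rw [prl_of_ge h, Real.log_mul (Real.exp_ne_zero _) (pow_ne_zero _ hw), Real.log_exp, Real.log_pow]
  push_cast; ring

lemma kT_far {u : ℝ} {w : ℂ} (h : 1 ≤ Real.exp u * ‖w‖ ^ 2) : kT (u, w) = 0 := by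
  simp only [kT]
  rw [prp_of_ge h, mul_zero]

lemma kT_nonneg (x : ℝ × ℂ) : 0 ≤ kT x :=
  mul_nonneg (by positivity) (prp_nonneg _)

lemma lap_add {f g : ℂ → ℝ} (hf : ContDiff ℝ (⊤ : ℕ∞) f) (hg : ContDiff ℝ (⊤ : ℕ∞) g) (z : ℂ) :
    lap (fun z => f z + g z) z = lap f z + lap g z := by
  have hf2 : ContDiffAt ℝ ((2:ℕ) : WithTop ℕ∞) f z := (contDiff_infty.1 hf 2).contDiffAt
  have hg2 : ContDiffAt ℝ ((2:ℕ) : WithTop ℕ∞) g z := (contDiff_infty.1 hg 2).contDiffAt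
  have h : iteratedFDeriv ℝ 2 (fun z => f z + g z) z = _ := iteratedFDeriv_add_apply hf2 hg2
  simp only [lap, h]
  simp only [add_apply]
  ring

lemma lap_const_mul {f : ℂ → ℝ} (hf : ContDiff ℝ (⊤ : ℕ∞) f) (c : ℝ) (z : ℂ) :
    lap (fun z => c * f z) z = c * lap f z := by
  have hf2 : ContDiffAt ℝ ((2:ℕ) : WithTop ℕ∞) f z := (contDiff_infty.1 hf 2).contDiffAt
  have h : iteratedFDeriv ℝ 2 (fun z => c * f z) z = _ := iteratedFDeriv_const_smul_apply (a := c) hf2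
  simp only [lap, h]
  simp only [smul_apply, smul_eq_mul]
  ring

lemma lap_sub {f g : ℂ → ℝ} (hf : ContDiff ℝ (⊤ : ℕ∞) f) (hg : ContDiff ℝ (⊤ : ℕ∞) g) (z : ℂ) :
    lap (fun z => f z - g z) z = lap f z - lap g z := by
  have h1 : (fun z => f z - g z) = fun z => f z + (-1) * g z := by ext; ring
  rw [h1, lap_add hf (contDiff_const.mul hg), lap_const_mul hg]; ring

lemma slice_contDiff {k : ℝ × ℂ → ℝ} (hk : ContDiff ℝ (⊤ : ℕ∞) k) (u : ℝ) (ζ : ℂ) :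
    ContDiff ℝ (⊤ : ℕ∞) (fun z => k (u, z - ζ)) :=
  hk.comp (contDiff_const.prodMk (contDiff_id.sub contDiff_const))

lemma lap_kE (u : ℝ) (ζ z : ℂ) : lap (fun z => kE (u, z - ζ)) z = kT (u, z - ζ) := by
  have hl : ContDiff ℝ (⊤ : ℕ∞) (fun x : ℝ => (1/2) * (prl (Real.exp u * x) - u)) :=
    contDiff_const.mul ((prl_contDiff.comp (contDiff_const.mul contDiff_id)).sub contDiff_const)
  have h := lap_radial hl ζ z
  have hm : ∀ x : ℝ, HasDerivAt (fun x : ℝ => Real.exp u * x) (Real.exp u) x := fun x => by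
    simpa using (hasDerivAt_id x).const_mul (Real.exp u)
  have d1 : deriv (fun x : ℝ => (1/2) * (prl (Real.exp u * x) - u)) =
      fun x => (1/2) * (prq (Real.exp u * x) * Real.exp u) := by
    ext x
    exact ((((prl_hasDerivAt _).comp x (hm x)).sub_const u).const_mul (1/2)).deriv
  have d2 : ∀ x, deriv (fun x : ℝ => (1/2) * (prq (Real.exp u * x) * Real.exp u)) x =
      (1/2) * (deriv prq (Real.exp u * x) * Real.exp u * Real.exp u) := by
    intro x
    have hq : HasDerivAt prq (deriv prq (Real.exp u * x)) (Real.exp u * x) :=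
      (prq_contDiff.differentiable (by simp) _).hasDerivAt
    exact (((hq.comp x (hm x)).mul_const (Real.exp u)).const_mul (1/2)).deriv
  rw [d1, d2] at h
  simp only [kE, kT, prp]
  rw [h]; ring

lemma kE_symm (u : ℝ) (z ζ : ℂ) : kE (u, z - ζ) = kE (u, ζ - z) := by
  simp only [kE, norm_sub_rev]

lemma kT_symm (u : ℝ) (z ζ : ℂ) : kT (u, z - ζ) = kT (u, ζ - z) := by
  simp only [kT, norm_sub_rev]

lemma lap_kT_symm (u : ℝ) (ζ z : ℂ) :
    lap (fun z => kT (u, z - ζ)) z = lap (fun ζ => kT (u, z - ζ)) ζ := by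
  have hl : ContDiff ℝ (⊤ : ℕ∞) (fun x : ℝ => 2 * Real.exp u * prp (Real.exp u * x)) :=
    contDiff_const.mul (prp_contDiff.comp (contDiff_const.mul contDiff_id))
  have h1 := lap_radial hl ζ z
  have h2 := lap_radial hl z ζ
  have e : (fun ζ => kT (u, z - ζ)) =
      fun ζ => (fun x : ℝ => 2 * Real.exp u * prp (Real.exp u * x)) (‖ζ - z‖ ^ 2) := by
    ext ζ; simp only [kT, norm_sub_rev]
  have e' : (fun z => kT (u, z - ζ)) =
      fun z => (fun x : ℝ => 2 * Real.exp u * prp (Real.exp u * x)) (‖z - ζ‖ ^ 2) := rfl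
  rw [e, e', h1, h2, norm_sub_rev]

lemma kT_kder_norm (u : ℝ) (w : ℂ) :
    ‖kder kT (u, w)‖ =
      4 * Real.exp u ^ 2 * |deriv prp (Real.exp u * ‖w‖ ^ 2)| * ‖w‖ := by
  have h1 := kder_hasFDerivAt kT_contDiff u 0 w
  have hl : ContDiff ℝ (⊤ : ℕ∞) (fun x : ℝ => 2 * Real.exp u * prp (Real.exp u * x)) :=
    contDiff_const.mul (prp_contDiff.comp (contDiff_const.mul contDiff_id))
  have h2 := radial_hasFDerivAt (hl.differentiable (by simp)) 0 w
  have h3 := h1.unique h2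
  rw [sub_zero] at h3
  have hm : HasDerivAt (fun x : ℝ => Real.exp u * x) (Real.exp u) (‖w‖ ^ 2) := by
    simpa using (hasDerivAt_id (‖w‖ ^ 2)).const_mul (Real.exp u)
  have hq : HasDerivAt prp (deriv prp (Real.exp u * ‖w‖ ^ 2)) (Real.exp u * ‖w‖ ^ 2) :=
    (prp_contDiff.differentiable (by simp) _).hasDerivAt
  have d : deriv (fun x : ℝ => 2 * Real.exp u * prp (Real.exp u * x)) (‖w‖ ^ 2) =
      2 * Real.exp u * (deriv prp (Real.exp u * ‖w‖ ^ 2) * Real.exp u) :=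
    ((hq.comp _ hm).const_mul _).deriv
  rw [h3, d, norm_smul, innerSL_apply_norm, Real.norm_eq_abs]
  have e : |2 * (2 * Real.exp u * (deriv prp (Real.exp u * ‖w‖ ^ 2) * Real.exp u))| =
      4 * Real.exp u ^ 2 * |deriv prp (Real.exp u * ‖w‖ ^ 2)| := by
    rw [show 2 * (2 * Real.exp u * (deriv prp (Real.exp u * ‖w‖ ^ 2) * Real.exp u)) =
      (4 * Real.exp u ^ 2) * deriv prp (Real.exp u * ‖w‖ ^ 2) by ring, abs_mul,
      abs_of_nonneg (by positivity : 0 ≤ 4 * Real.exp u ^ 2)]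
  rw [e]

lemma kT_compact (u : ℝ) (z : ℂ) : HasCompactSupport (fun ζ => kT (u, z - ζ)) := by
  refine HasCompactSupport.intro (isCompact_closedBall z (Real.exp (-u/2))) fun ζ hζ => ?_
  apply kT_far
  rw [mem_closedBall, not_le, dist_eq_norm, norm_sub_rev] at hζ
  have h1 : Real.exp (-u/2) ^ 2 ≤ ‖z - ζ‖ ^ 2 := by gcongr
  have h2 : Real.exp u * Real.exp (-u/2) ^ 2 = 1 := by
    rw [← Real.exp_nat_mul, ← Real.exp_add]; simp; ring
  rw [← h2]; gcongr

lemma kE_sub_compact (u v : ℝ) (z : ℂ) :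
    HasCompactSupport (fun ζ => kE (u, z - ζ) - kE (v, z - ζ)) := by
  refine HasCompactSupport.intro
    (isCompact_closedBall z (max (Real.exp (-u/2)) (Real.exp (-v/2)))) fun ζ hζ => ?_
  rw [mem_closedBall, not_le, dist_eq_norm, norm_sub_rev, max_lt_iff] at hζ
  have h1 : ∀ u, Real.exp (-u/2) < ‖z - ζ‖ → 1 ≤ Real.exp u * ‖z - ζ‖ ^ 2 := by
    intro u hu
    have h1 : Real.exp (-u/2) ^ 2 ≤ ‖z - ζ‖ ^ 2 := by gcongr
    have h2 : Real.exp u * Real.exp (-u/2) ^ 2 = 1 := by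
      rw [← Real.exp_nat_mul, ← Real.exp_add]; simp; ring
    rw [← h2]; gcongr
  rw [kE_far (h1 u hζ.1), kE_far (h1 v hζ.2), sub_self]

def I0 : ℝ := ∫ w, kT (0, w)

lemma kT_slice_continuous (u : ℝ) : Continuous (fun w => kT (u, w)) :=
  kT_contDiff.continuous.comp (by fun_prop)

lemma I0_pos : 0 < I0 := by
  have h := kT_compact 0 0
  have e : (fun ζ => kT (0, 0 - ζ)) = fun w => kT (0, w) := by
    ext ζ; rw [kT_symm, sub_zero]
  rw [e] at h
  refine (kT_slice_continuous 0).integral_pos_of_hasCompactSupport_nonneg_nonzero h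
    (fun _ => kT_nonneg _) (x := 0) ?_
  simp only [kT]
  rw [prp_of_lt (by norm_num)]
  positivity

lemma kT_integral (u : ℝ) : ∫ w, kT (u, w) = I0 := by
  have e : ∀ w : ℂ, kT (u, w) = Real.exp u * kT (0, Real.exp (u/2) • w) := by
    intro w
    simp only [kT, norm_smul, mul_pow, Real.exp_zero, Real.norm_eq_abs, sq_abs]
    rw [show Real.exp (u/2) ^ 2 = Real.exp u by rw [← Real.exp_nat_mul]; congr 1; push_cast; ring]
    ring_nf
  simp only [e]
  rw [integral_const_mul, Measure.integral_comp_smul (μ := (volume : Measure ℂ))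
    (fun w => kT (0, w)) (Real.exp (u/2))]
  rw [Complex.finrank_real_complex,
    show Real.exp (u/2) ^ 2 = Real.exp u by rw [← Real.exp_nat_mul]; congr 1; push_cast; ring,
    abs_of_pos (by positivity), smul_eq_mul, I0]
  rw [← mul_assoc, mul_inv_cancel₀ (Real.exp_ne_zero u), one_mul]

lemma kT_integral_left (u : ℝ) (ζ : ℂ) : ∫ z, kT (u, z - ζ) = I0 := by
  rw [integral_sub_right_eq_self (fun w => kT (u, w)) ζ, kT_integral]

/-- `log t + ½ prl` bounds. -/
lemma kE_diff_bound {M : ℝ} (hM1 : 1 ≤ M) (hM : ∀ x, 0 ≤ x → x ≤ 1 → |prl x| ≤ M)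
    {t s R : ℝ} (hs : 0 < s) (hst : s ≤ t) (htR : t ≤ R) {w : ℂ} :
    |kE (-2 * Real.log t, w) - kE (-2 * Real.log s, w)| ≤
      (if ‖w‖ < t then M else 0) + max 0 (Real.log (R / max ‖w‖ s)) := by
  have ht : 0 < t := hs.trans_le hst
  have hex : ∀ a : ℝ, 0 < a → Real.exp (-2 * Real.log a) * ‖w‖ ^ 2 = (‖w‖ / a) ^ 2 := by
    intro a ha
    rw [show -2 * Real.log a = -(Real.log a + Real.log a) by ring, Real.exp_neg, Real.exp_add,
      Real.exp_log ha]
    field_simp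
  have hfar : ∀ a : ℝ, 0 < a → a ≤ ‖w‖ → kE (-2 * Real.log a, w) = Real.log ‖w‖ := by
    intro a ha haw
    apply kE_far
    rw [hex a ha]
    exact one_le_pow₀ ((one_le_div ha).2 haw)
  have hnear : ∀ a : ℝ, 0 < a → ‖w‖ ≤ a → |kE (-2 * Real.log a, w) - Real.log a| ≤ M / 2 := by
    intro a ha haw
    have : kE (-2 * Real.log a, w) - Real.log a = (1/2) * prl ((‖w‖ / a) ^ 2) := by
      simp only [kE]; rw [hex a ha]; ring
    rw [this, abs_mul, abs_of_pos (by norm_num : (0:ℝ) < 1/2)]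
    have := hM ((‖w‖ / a) ^ 2) (by positivity)
      (pow_le_one₀ (by positivity) ((div_le_one ha).2 haw))
    linarith
  rcases le_or_gt t ‖w‖ with h | h
  · rw [hfar t ht h, hfar s hs (hst.trans h), sub_self, abs_zero, if_neg (not_lt.2 h), zero_add]
    exact le_max_left _ _
  rw [if_pos h]
  have hR : 0 < R := ht.trans_le htR
  set m := max ‖w‖ s with hm
  have hm0 : 0 < m := lt_max_of_lt_right hs
  have hmt : m ≤ t := max_le h.le hst
  have h1 := hnear t ht h.le
  have h2 : |kE (-2 * Real.log s, w) - Real.log m| ≤ M / 2 := by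
    rcases le_total s ‖w‖ with h' | h'
    · rw [hm, max_eq_left h', hfar s hs h', sub_self, abs_zero]; linarith
    · rw [hm, max_eq_right h']; exact hnear s hs h'
  have h3 : 0 ≤ Real.log t - Real.log m := sub_nonneg.2 (Real.log_le_log hm0 hmt)
  have h4 : Real.log t - Real.log m ≤ Real.log (R / m) := by
    rw [Real.log_div hR.ne' hm0.ne']
    linarith [Real.log_le_log ht htR]
  have h5 := le_max_right 0 (Real.log (R / m))
  rw [abs_le] at h1 h2 ⊢
  constructor <;> linarith [h1.1, h1.2, h2.1, h2.2]

/-! ### The Laplacian density -/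

def u0 (ρ : ℂ → ℝ) (ζ : ℂ) : ℝ := -2 * Real.log (ρ ζ / 8)

namespace Good

variable {μ : Measure ℂ} {ρ : ℂ → ℝ} {D : ℝ}

lemma u0_continuous (h : Good μ ρ D) : Continuous (u0 ρ) := by
  refine continuous_const.mul (Continuous.log (h.rho_continuous.div_const _) fun z => ?_)
  have := h.rpos z
  positivity

lemma exp_u0 (h : Good μ ρ D) (ζ : ℂ) : Real.exp (u0 ρ ζ) = 64 / ρ ζ ^ 2 := by
  have := h.rpos ζ
  rw [u0, show -2 * Real.log (ρ ζ / 8) = -(Real.log (ρ ζ / 8) + Real.log (ρ ζ / 8)) by ring,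
    Real.exp_neg, Real.exp_add, Real.exp_log (by positivity)]
  field_simp; norm_num

lemma far_iff (h : Good μ ρ D) {ζ w : ℂ} (hw : ρ ζ / 8 ≤ ‖w‖) :
    1 ≤ Real.exp (u0 ρ ζ) * ‖w‖ ^ 2 := by
  have h0 := h.rpos ζ
  rw [h.exp_u0, div_mul_eq_mul_div, one_le_div (by positivity)]
  have : (ρ ζ / 8) ^ 2 ≤ ‖w‖ ^ 2 := by gcongr
  nlinarith

lemma supp_of (h : Good μ ρ D) {k : ℝ × ℂ → ℝ}
    (hk : ∀ u w, 1 ≤ ‖w‖ → 1 ≤ Real.exp u * ‖w‖ ^ 2 → k (u, w) = 0) : SuppCond (u0 ρ) k := by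
  intro z₀
  refine ⟨1, one_pos, ‖z₀‖ + 3 + ρ z₀, fun z hz ζ hζ => ?_⟩
  rw [mem_closedBall, dist_zero_right, not_le] at hζ
  rw [mem_ball, dist_eq_norm] at hz
  have h0 := h.rpos z₀
  have h1 : ‖ζ‖ ≤ ‖z - ζ‖ + ‖z - z₀‖ + ‖z₀‖ := by
    calc ‖ζ‖ = ‖-(z - ζ) + (z - z₀) + z₀‖ := by congr 1; ring
      _ ≤ _ := norm_add₃_le.trans (by rw [norm_neg])
  have h2 := h.rho_le z₀ ζ
  have h3 : ‖z₀ - ζ‖ ≤ ‖z - ζ‖ + ‖z - z₀‖ := by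
    calc ‖z₀ - ζ‖ = ‖(z - ζ) - (z - z₀)‖ := by congr 1; ring
      _ ≤ _ := norm_sub_le _ _
  exact hk _ _ (by linarith) (h.far_iff (by linarith))

lemma supp_kT (h : Good μ ρ D) : SuppCond (u0 ρ) kT := h.supp_of fun _ _ _ hw => kT_far hw

def T (μ : Measure ℂ) (ρ : ℂ → ℝ) (z : ℂ) : ℝ := ∫ ζ, (1:ℝ) • kT (u0 ρ ζ, z - ζ) ∂μ

lemma T_contDiff (h : Good μ ρ D) : ContDiff ℝ (⊤ : ℕ∞) (T μ ρ) :=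
  have := h.finC
  param_contDiff h.u0_continuous continuous_const kT_contDiff h.supp_kT

lemma near (h : Good μ ρ D) {z ζ : ℂ} (hz : ‖z - ζ‖ < ρ ζ / 8) :
    ζ ∈ ball z (ρ z) ∧ (ρ z) ≤ (9/8) * ρ ζ ∧ ρ ζ ≤ (8/7) * ρ z := by
  have h1 := h.rho_le z ζ
  have h2 := h.rho_le ζ z
  rw [norm_sub_rev] at h2
  have := h.rpos z
  refine ⟨?_, by linarith, by linarith⟩
  rw [mem_ball, dist_eq_norm, norm_sub_rev]
  linarith

lemma exp_near (h : Good μ ρ D) {z ζ : ℂ} (hz : ‖z - ζ‖ < ρ ζ / 8) :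
    Real.exp (u0 ρ ζ) ≤ 81 / ρ z ^ 2 := by
  have h1 := (h.near hz).2.1
  have h2 := h.rpos z
  have h3 := h.rpos ζ
  rw [h.exp_u0, div_le_div_iff₀ (by positivity) (by positivity)]
  have : ρ z ^ 2 ≤ ((9/8) * ρ ζ) ^ 2 := by gcongr
  nlinarith

lemma T_upper (h : Good μ ρ D) {M : ℝ} (hM0 : 1 ≤ M) (hM : ∀ x, 0 ≤ x → prp x ≤ M) (z : ℂ) :
    T μ ρ z ≤ 162 * M * (ρ z ^ 2)⁻¹ := by
  have hz := h.rpos z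
  have e : T μ ρ z = ∫ ζ in ball z (ρ z), (1:ℝ) • kT (u0 ρ ζ, z - ζ) ∂μ := by
    refine (setIntegral_eq_integral_of_forall_compl_eq_zero fun ζ hζ => ?_).symm
    rw [one_smul]
    apply kT_far
    apply h.far_iff
    by_contra hc
    exact hζ (h.near (not_le.1 hc)).1
  rw [e]
  refine (le_abs_self _).trans ?_
  have := norm_setIntegral_le_of_norm_le_const (μ := μ) (s := ball z (ρ z))
    (f := fun ζ => (1:ℝ) • kT (u0 ρ ζ, z - ζ)) (C := 162 * M * (ρ z ^ 2)⁻¹) (h.fin _ _) ?_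
  · rwa [h.rone, mul_one] at this
  intro ζ _
  rw [one_smul, Real.norm_of_nonneg (kT_nonneg _)]
  by_cases hc : ‖z - ζ‖ < ρ ζ / 8
  · have h1 := h.exp_near hc
    have h2 := hM (Real.exp (u0 ρ ζ) * ‖z - ζ‖ ^ 2) (by positivity)
    simp only [kT]
    calc 2 * Real.exp (u0 ρ ζ) * prp (Real.exp (u0 ρ ζ) * ‖z - ζ‖ ^ 2)
        ≤ 2 * (81 / ρ z ^ 2) * M := by gcongr; exact prp_nonneg _
      _ = _ := by field_simp; norm_num
  · rw [kT_far (h.far_iff (not_lt.1 hc))]; positivity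

lemma T_grad (h : Good μ ρ D) {M : ℝ} (hM0 : 1 ≤ M) (hM : ∀ x, 0 ≤ x → |deriv prp x| ≤ M)
    (z : ℂ) : ‖fderiv ℝ (T μ ρ) z‖ ≤ 30000 * M * (ρ z ^ 3)⁻¹ := by
  have hz := h.rpos z
  have := h.finC
  have hd : fderiv ℝ (T μ ρ) z = ∫ ζ, (1:ℝ) • kder kT (u0 ρ ζ, z - ζ) ∂μ :=
    (param_hasFDerivAt kT_contDiff h.u0_continuous continuous_const h.supp_kT z).fderiv
  have hfar : ∀ ζ, ¬ ‖z - ζ‖ < ρ ζ / 8 → kder kT (u0 ρ ζ, z - ζ) = 0 := by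
    intro ζ hc
    rw [← norm_eq_zero, kT_kder_norm, prp_deriv_of_ge (h.far_iff (not_lt.1 hc))]
    simp
  have e : fderiv ℝ (T μ ρ) z = ∫ ζ in ball z (ρ z), (1:ℝ) • kder kT (u0 ρ ζ, z - ζ) ∂μ := by
    rw [hd]
    refine (setIntegral_eq_integral_of_forall_compl_eq_zero fun ζ hζ => ?_).symm
    rw [one_smul]
    apply hfar
    intro hc
    exact hζ (h.near hc).1
  rw [e]
  have := norm_setIntegral_le_of_norm_le_const (μ := μ) (s := ball z (ρ z))
    (f := fun ζ => (1:ℝ) • kder kT (u0 ρ ζ, z - ζ)) (C := 30000 * M * (ρ z ^ 3)⁻¹) (h.fin _ _) ?_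
  · rwa [h.rone, mul_one] at this
  intro ζ hζ
  rw [one_smul]
  by_cases hc : ‖z - ζ‖ < ρ ζ / 8
  · have h1 := h.exp_near hc
    have h2 := hM (Real.exp (u0 ρ ζ) * ‖z - ζ‖ ^ 2) (by positivity)
    have h3 : ‖z - ζ‖ ≤ ρ z := by
      rw [mem_ball, dist_eq_norm, norm_sub_rev] at hζ; exact hζ.le
    rw [kT_kder_norm]
    calc 4 * Real.exp (u0 ρ ζ) ^ 2 * |deriv prp (Real.exp (u0 ρ ζ) * ‖z - ζ‖ ^ 2)| * ‖z - ζ‖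
        ≤ 4 * (81 / ρ z ^ 2) ^ 2 * M * ρ z := by gcongr
      _ = 26244 * M * (ρ z ^ 3)⁻¹ := by field_simp; norm_num
      _ ≤ _ := by gcongr; norm_num
  · rw [hfar ζ hc, norm_zero]; positivity

lemma T_integrable (h : Good μ ρ D) (z : ℂ) :
    Integrable (fun ζ => kT (u0 ρ ζ, z - ζ)) μ := by
  have := h.finC
  simpa using supp_integrable (μ := μ) kT_contDiff.continuous h.u0_continuous
    (continuous_const (y := (1:ℝ))) h.supp_kT z

lemma T_lower (h : Good μ ρ D) (z : ℂ) :
    100 / D ^ 4 * (ρ z ^ 2)⁻¹ ≤ T μ ρ z := by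
  have hz := h.rpos z
  have hD := h.one_le
  have hi := h.T_integrable z
  have h1 : ∫ ζ in ball z (ρ z / 16), kT (u0 ρ ζ, z - ζ) ∂μ ≤ T μ ρ z := by
    have e : T μ ρ z = ∫ ζ, kT (u0 ρ ζ, z - ζ) ∂μ := by simp [T]
    rw [e]
    exact setIntegral_le_integral hi (Eventually.of_forall fun ζ => kT_nonneg _)
  refine le_trans ?_ h1
  have h2 : ∫ ζ in ball z (ρ z / 16), 100 * (ρ z ^ 2)⁻¹ ∂μ ≤
      ∫ ζ in ball z (ρ z / 16), kT (u0 ρ ζ, z - ζ) ∂μ := by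
    refine setIntegral_mono_on (integrableOn_const (h.fin _ _).ne) hi.integrableOn
      measurableSet_ball fun ζ hζ => ?_
    rw [mem_ball, dist_eq_norm, norm_sub_rev] at hζ
    have r1 := h.rho_le z ζ
    have r2 := h.rho_le ζ z
    rw [norm_sub_rev] at r2
    have r3 := h.rpos ζ
    simp only [kT]
    rw [prp_of_lt, h.exp_u0]
    · have : ρ ζ ^ 2 ≤ ((17/16) * ρ z) ^ 2 := by gcongr; linarith
      rw [mul_one, ← div_eq_mul_inv, ← mul_div_assoc, div_le_div_iff₀ (by positivity) (by positivity)]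
      nlinarith
    · rw [h.exp_u0, div_mul_eq_mul_div, div_lt_div_iff₀ (by positivity) (by norm_num)]
      have a1 : ‖z - ζ‖ ^ 2 ≤ (ρ z / 16) ^ 2 := by gcongr
      have a2 : ((15/16) * ρ z) ^ 2 ≤ ρ ζ ^ 2 := by gcongr; linarith
      nlinarith
  refine le_trans ?_ h2
  rw [setIntegral_const, smul_eq_mul]
  have h3 := h.dbl_pow z (show 0 < ρ z / 16 by positivity) 4
  rw [show (2:ℝ) ^ 4 * (ρ z / 16) = ρ z by ring, h.rone] at h3
  have h4 : 1 / D ^ 4 ≤ μ.real (ball z (ρ z / 16)) := by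
    rw [div_le_iff₀ (by positivity)]; linarith
  calc 100 / D ^ 4 * (ρ z ^ 2)⁻¹ = 1 / D ^ 4 * (100 * (ρ z ^ 2)⁻¹) := by ring
    _ ≤ _ := by gcongr

/-! ### The measure with density `T / I0` -/

def nu (μ : Measure ℂ) (ρ : ℂ → ℝ) : Measure ℂ :=
  volume.withDensity fun z => ENNReal.ofReal (I0⁻¹ * T μ ρ z)

def innerM (ρ : ℂ → ℝ) (z : ℂ) (r : ℝ) (ζ : ℂ) : ℝ≥0∞ :=
  ∫⁻ w in ball z r, ENNReal.ofReal (I0⁻¹ * kT (u0 ρ ζ, w - ζ))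

lemma nu_ball (h : Good μ ρ D) (z : ℂ) (r : ℝ) :
    nu μ ρ (ball z r) = ∫⁻ ζ, innerM ρ z r ζ ∂μ := by
  have := h.finC
  have hI := I0_pos
  rw [nu, withDensity_apply _ measurableSet_ball]
  have e : ∀ w, ENNReal.ofReal (I0⁻¹ * T μ ρ w) =
      ∫⁻ ζ, ENNReal.ofReal (I0⁻¹ * kT (u0 ρ ζ, w - ζ)) ∂μ := by
    intro w
    rw [← ofReal_integral_eq_lintegral_ofReal ((h.T_integrable w).const_mul _)
      (Eventually.of_forall fun ζ => mul_nonneg (by positivity) (kT_nonneg _)),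
      integral_const_mul]
    simp [T]
  simp only [e, innerM]
  refine lintegral_lintegral_swap ?_
  have hc := h.u0_continuous
  have hk := kT_contDiff.continuous
  have : Continuous (fun p : ℂ × ℂ => I0⁻¹ * kT (u0 ρ p.2, p.1 - p.2)) := by fun_prop
  exact (ENNReal.measurable_ofReal.comp this.measurable).aemeasurable

lemma inner_full (ρ : ℂ → ℝ) (ζ : ℂ) :
    ∫⁻ w, ENNReal.ofReal (I0⁻¹ * kT (u0 ρ ζ, w - ζ)) = 1 := by
  have hI := I0_pos
  have hIntg : Integrable (fun w => kT (u0 ρ ζ, w - ζ)) := by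
    have hc := kT_compact (u0 ρ ζ) ζ
    simp only [kT_symm _ ζ] at hc
    exact (kT_contDiff.continuous.comp (by fun_prop)).integrable_of_hasCompactSupport hc
  rw [← ofReal_integral_eq_lintegral_ofReal (hIntg.const_mul _)
    (Eventually.of_forall fun ζ => mul_nonneg (by positivity) (kT_nonneg _)),
    integral_const_mul, kT_integral_left, inv_mul_cancel₀ hI.ne', ENNReal.ofReal_one]

lemma inner_le (ρ : ℂ → ℝ) (z : ℂ) (r : ℝ) (ζ : ℂ) : innerM ρ z r ζ ≤ 1 := by
  rw [← inner_full ρ ζ]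
  exact setLIntegral_le_lintegral _ _

lemma inner_zero (h : Good μ ρ D) {z : ℂ} {r : ℝ} {ζ : ℂ} (hz : r + ρ ζ / 8 ≤ ‖z - ζ‖) :
    innerM ρ z r ζ = 0 := by
  rw [innerM, setLIntegral_congr_fun (g := fun _ => 0) measurableSet_ball, lintegral_zero]
  intro w hw
  rw [mem_ball, dist_eq_norm, norm_sub_rev] at hw
  have : ‖z - ζ‖ ≤ ‖z - w‖ + ‖w - ζ‖ := norm_sub_le_norm_sub_add_norm_sub _ _ _
  simp only
  rw [kT_far (h.far_iff (by linarith))]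
  simp

lemma inner_one (h : Good μ ρ D) {z : ℂ} {r : ℝ} {ζ : ℂ} (hz : ‖z - ζ‖ + ρ ζ / 8 ≤ r) :
    innerM ρ z r ζ = 1 := by
  rw [← inner_full ρ ζ, innerM]
  refine setLIntegral_eq_of_support_subset ?_
  intro w hw
  by_contra hc
  apply hw
  rw [mem_ball, dist_eq_norm, not_lt, norm_sub_rev] at hc
  have : ‖z - w‖ ≤ ‖z - ζ‖ + ‖w - ζ‖ := by
    rw [norm_sub_rev w ζ]
    exact norm_sub_le_norm_sub_add_norm_sub _ _ _
  change ENNReal.ofReal (I0⁻¹ * kT (u0 ρ ζ, w - ζ)) = 0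
  rw [kT_far (h.far_iff (by linarith))]
  simp

lemma nu_upper (h : Good μ ρ D) {z : ℂ} {r : ℝ} (hr : ρ z / 4 ≤ r) :
    nu μ ρ (ball z (2 * r)) ≤ μ (ball z (4 * r)) := by
  rw [h.nu_ball, ← lintegral_indicator_one measurableSet_ball]
  refine lintegral_mono fun ζ => ?_
  by_cases hζ : ζ ∈ ball z (4 * r)
  · rw [indicator_of_mem hζ]; exact inner_le _ _ _ _
  · rw [indicator_of_notMem hζ]
    rw [mem_ball, dist_eq_norm, norm_sub_rev, not_lt] at hζ
    have := h.rho_le z ζ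
    have := h.rpos z
    rw [h.inner_zero (by linarith)]

lemma nu_lower (h : Good μ ρ D) {z : ℂ} {r : ℝ} (hr : ρ z / 4 ≤ r) :
    μ (ball z (r / 4)) ≤ nu μ ρ (ball z r) := by
  rw [h.nu_ball, ← lintegral_indicator_one measurableSet_ball]
  refine lintegral_mono fun ζ => ?_
  by_cases hζ : ζ ∈ ball z (r / 4)
  · rw [mem_ball, dist_eq_norm, norm_sub_rev] at hζ
    have := h.rho_le z ζ
    have := h.rpos z
    rw [h.inner_one (by linarith)]
    exact indicator_le_self' (by simp) _
  · rw [indicator_of_notMem hζ]; exact zero_le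

lemma nu_small_upper (h : Good μ ρ D) {K : ℝ}
    (hK : ∀ z, I0⁻¹ * T μ ρ z ≤ K * (ρ z ^ 2)⁻¹) (hK0 : 0 < K) {z : ℂ} {r : ℝ} (hr : r ≤ ρ z / 2) :
    nu μ ρ (ball z r) ≤ ENNReal.ofReal (4 * K * (ρ z ^ 2)⁻¹) * volume (ball z r) := by
  have hz := h.rpos z
  rw [nu, withDensity_apply _ measurableSet_ball, ← setLIntegral_const]
  refine setLIntegral_mono measurable_const fun w hw => ?_
  apply ENNReal.ofReal_le_ofReal
  refine (hK w).trans ?_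
  rw [mem_ball, dist_eq_norm] at hw
  have h1 := h.rho_le w z
  have h2 : (ρ z / 2) ^ 2 ≤ ρ w ^ 2 := by gcongr; linarith
  have h3 : (ρ w ^ 2)⁻¹ ≤ ((ρ z / 2) ^ 2)⁻¹ := by gcongr
  calc K * (ρ w ^ 2)⁻¹ ≤ K * ((ρ z / 2) ^ 2)⁻¹ := by gcongr
    _ = _ := by field_simp; norm_num

lemma nu_small_lower (h : Good μ ρ D) {k : ℝ}
    (hk : ∀ z, k * (ρ z ^ 2)⁻¹ ≤ I0⁻¹ * T μ ρ z) (hk0 : 0 < k) {z : ℂ} {r : ℝ} (hr : r ≤ ρ z / 2) :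
    ENNReal.ofReal (k / 4 * (ρ z ^ 2)⁻¹) * volume (ball z r) ≤ nu μ ρ (ball z r) := by
  have hz := h.rpos z
  rw [nu, withDensity_apply _ measurableSet_ball, ← setLIntegral_const]
  have hm : Measurable fun z => ENNReal.ofReal (I0⁻¹ * T μ ρ z) :=
    ENNReal.measurable_ofReal.comp (continuous_const.mul h.T_contDiff.continuous).measurable
  refine setLIntegral_mono hm fun w hw => ?_
  apply ENNReal.ofReal_le_ofReal
  refine le_trans ?_ (hk w)
  rw [mem_ball, dist_eq_norm] at hw
  have h1 := h.rho_le z w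
  rw [norm_sub_rev] at h1
  have hw0 := h.rpos w
  have h2 : ρ w ^ 2 ≤ (2 * ρ z) ^ 2 := by gcongr; linarith
  have h3 : ((2 * ρ z) ^ 2)⁻¹ ≤ (ρ w ^ 2)⁻¹ := by gcongr
  calc k / 4 * (ρ z ^ 2)⁻¹ = k * ((2 * ρ z) ^ 2)⁻¹ := by field_simp; norm_num
    _ ≤ _ := by gcongr

lemma nu_doubling (h : Good μ ρ D) {k K : ℝ} (hK0 : 0 < K) (hk0 : 0 < k)
    (hK : ∀ z, I0⁻¹ * T μ ρ z ≤ K * (ρ z ^ 2)⁻¹)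
    (hk : ∀ z, k * (ρ z ^ 2)⁻¹ ≤ I0⁻¹ * T μ ρ z) :
    ∃ Cd : ℝ≥0, 0 < Cd ∧ IsDoubling (nu μ ρ) Cd := by
  have hD := h.one_le
  refine ⟨Real.toNNReal (D ^ 4 + 64 * K / k), Real.toNNReal_pos.2 (by positivity), ?_⟩
  intro z r hr
  have hz := h.rpos z
  change _ ≤ ENNReal.ofReal (D ^ 4 + 64 * K / k) * _
  rcases le_or_gt (ρ z / 4) r with h1 | h1
  · have h2 := h.dbl_pow z (show 0 < r / 4 by positivity) 4
    have h3 : μ (ball z (4 * r)) ≤ ENNReal.ofReal (D ^ 4) * μ (ball z (r / 4)) := by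
      rw [← ENNReal.ofReal_toReal (h.fin z (4 * r)).ne, ← ENNReal.ofReal_toReal (h.fin z (r/4)).ne,
        ← ENNReal.ofReal_mul (by positivity)]
      apply ENNReal.ofReal_le_ofReal
      rw [show (2:ℝ) ^ 4 * (r / 4) = 4 * r by ring] at h2
      exact h2
    calc nu μ ρ (ball z (2 * r)) ≤ μ (ball z (4 * r)) := h.nu_upper h1
      _ ≤ ENNReal.ofReal (D ^ 4) * μ (ball z (r / 4)) := h3
      _ ≤ ENNReal.ofReal (D ^ 4 + 64 * K / k) * nu μ ρ (ball z r) := by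
        have : 0 < 64 * K / k := by positivity
        exact mul_le_mul' (ENNReal.ofReal_le_ofReal (by linarith)) (h.nu_lower h1)
  · have a1 := h.nu_small_upper hK hK0 (z := z) (r := 2 * r) (by linarith)
    have a2 := h.nu_small_lower hk hk0 (z := z) (r := r) (by linarith)
    have hv : volume (ball z (2 * r)) = ENNReal.ofReal 4 * volume (ball z r) := by
      rw [Complex.volume_ball, Complex.volume_ball, ENNReal.ofReal_mul (by norm_num), mul_pow,
        ← ENNReal.ofReal_pow (by norm_num : (0:ℝ) ≤ 2), mul_assoc]
      norm_num
    calc nu μ ρ (ball z (2 * r)) ≤ _ := a1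
      _ = ENNReal.ofReal (64 * K / k) *
          (ENNReal.ofReal (k / 4 * (ρ z ^ 2)⁻¹) * volume (ball z r)) := by
        rw [hv, ← mul_assoc, ← mul_assoc, ← ENNReal.ofReal_mul (by positivity),
          ← ENNReal.ofReal_mul (by positivity)]
        congr 2
        field_simp; norm_num
      _ ≤ ENNReal.ofReal (D ^ 4 + 64 * K / k) * nu μ ρ (ball z r) := by
        gcongr
        have : 0 < D ^ 4 := by positivity
        linarith

lemma nu_radius (h : Good μ ρ D) (z : ℂ) : ∃ r, 0 < r ∧ nu μ ρ (ball z r) = 1 := by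
  have hz := h.rpos z
  have hI := I0_pos
  set f : ℂ → ℝ := fun w => I0⁻¹ * T μ ρ w with hf
  have hfc : Continuous f := continuous_const.mul h.T_contDiff.continuous
  have hf0 : ∀ w, 0 ≤ f w := fun w => mul_nonneg (by positivity)
    (integral_nonneg fun ζ => by simpa using kT_nonneg _)
  have hfi : ∀ r, IntegrableOn f (ball z r) := fun r =>
    (hfc.continuousOn.integrableOn_compact (isCompact_closedBall z r)).mono_set
      ball_subset_closedBall
  have hnu : ∀ r, nu μ ρ (ball z r) = ENNReal.ofReal (∫ w in ball z r, f w) := by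
    intro r
    rw [nu, withDensity_apply _ measurableSet_ball,
      ofReal_integral_eq_lintegral_ofReal (hfi r) (Eventually.of_forall hf0)]
  set m : ℝ → ℝ := fun r => ∫ w in ball z r, f w with hm
  have hmc : Continuous m := by
    rw [continuous_iff_continuousAt]
    intro r₀
    have e : m = fun r => ∫ w, (ball z r).indicator f w := by
      ext r; rw [integral_indicator measurableSet_ball]
    rw [e]
    refine continuousAt_of_dominated (bound := (ball z (r₀ + 1)).indicator f) ?_ ?_ ?_ ?_
    · exact Eventually.of_forall fun r =>
        (hfc.aestronglyMeasurable).indicator measurableSet_ball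
    · filter_upwards [Iio_mem_nhds (lt_add_one r₀)] with r hr
      refine Eventually.of_forall fun w => ?_
      rw [Real.norm_of_nonneg (indicator_nonneg (fun x _ => hf0 x) w)]
      exact indicator_le_indicator_of_subset (ball_subset_ball (le_of_lt hr)) hf0 w
    · exact (hfi _).integrable_indicator measurableSet_ball
    · have hs : volume (sphere z r₀) = 0 := Measure.addHaar_sphere volume z r₀
      have : ∀ᵐ w ∂(volume : Measure ℂ), w ∉ sphere z r₀ := measure_eq_zero_iff_ae_notMem.1 hs
      filter_upwards [this] with w hw
      rw [mem_sphere] at hw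
      rcases lt_or_gt_of_ne hw with h1 | h1
      · refine (continuousAt_const (y := f w)).congr ?_
        filter_upwards [Ioi_mem_nhds h1] with r hr
        rw [indicator_of_mem]; exact hr
      · refine (continuousAt_const (y := (0:ℝ))).congr ?_
        filter_upwards [Iio_mem_nhds h1] with r hr
        rw [indicator_of_notMem]
        rw [mem_ball, not_lt]
        exact le_of_lt (mem_Iio.1 hr)
  obtain ⟨R, hR, hR1⟩ := h.large z
  have hRρ : ρ z < R := by
    by_contra hc
    have := h.mono (ball_subset_ball (x := z) (not_lt.1 hc))
    rw [h.rone] at this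
    linarith
  have hm0 : m 0 = 0 := by simp [hm]
  have hmR : 1 ≤ m (4 * R) := by
    have h1 := h.nu_lower (z := z) (r := 4 * R) (by linarith)
    rw [show 4 * R / 4 = R by ring, hnu] at h1
    have h2 : (1:ℝ≥0∞) ≤ μ (ball z R) := by
      rw [← ENNReal.ofReal_toReal (h.fin z R).ne, ENNReal.one_le_ofReal]
      exact hR1.le
    have h3 := h2.trans h1
    rwa [ENNReal.one_le_ofReal] at h3
  obtain ⟨r, hr, hr1⟩ := intermediate_value_Icc (by linarith : (0:ℝ) ≤ 4 * R) hmc.continuousOn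
    (show (1:ℝ) ∈ Icc (m 0) (m (4 * R)) from ⟨by rw [hm0]; norm_num, hmR⟩)
  refine ⟨r, lt_of_le_of_ne hr.1 ?_, ?_⟩
  · rintro rfl
    rw [hm0] at hr1; norm_num at hr1
  · rw [hnu]; change ENNReal.ofReal (m r) = 1
    rw [hr1, ENNReal.ofReal_one]

lemma nu_radius_cmp (h : Good μ ρ D) {K : ℝ} (hK0 : 0 < K)
    (hK : ∀ z, I0⁻¹ * T μ ρ z ≤ K * (ρ z ^ 2)⁻¹) {z : ℂ} {r : ℝ} (hr : 0 < r)
    (hr1 : nu μ ρ (ball z r) = 1) : r ≤ 4 * ρ z ∧ ρ z ^ 2 ≤ (4 + 16 * K) * r ^ 2 := by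
  have hz := h.rpos z
  constructor
  · rcases le_or_gt (ρ z / 4) r with h1 | h1
    · have h2 := h.nu_lower h1
      rw [hr1] at h2
      have h3 : μ.real (ball z (r / 4)) ≤ 1 := by
        have := ENNReal.toReal_mono ENNReal.one_ne_top h2
        simpa [Measure.real] using this
      linarith [h.le_rho h3]
    · linarith
  · rcases le_or_gt r (ρ z / 2) with h1 | h1
    · have h2 := h.nu_small_upper hK hK0 h1
      rw [hr1, Complex.volume_ball, ← ENNReal.ofReal_pow hr.le] at h2
      have e : (NNReal.pi : ℝ≥0∞) = ENNReal.ofReal Real.pi := by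
        rw [← NNReal.coe_real_pi, ENNReal.ofReal_coe_nnreal]
      rw [e, ← ENNReal.ofReal_mul (by positivity), ← ENNReal.ofReal_mul (by positivity),
        ENNReal.one_le_ofReal] at h2
      have h3 : ρ z ^ 2 ≤ 4 * K * (r ^ 2 * Real.pi) := by
        have : 4 * K * (ρ z ^ 2)⁻¹ * (r ^ 2 * Real.pi) = 4 * K * (r ^ 2 * Real.pi) / ρ z ^ 2 := by
          field_simp
        rw [this, one_le_div (by positivity)] at h2
        exact h2
      have h4 : 4 * K * (r ^ 2 * Real.pi) ≤ 4 * K * (r ^ 2 * 4) := by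
        gcongr; exact Real.pi_le_four
      nlinarith [sq_nonneg r]
    · have : ρ z ^ 2 ≤ (2 * r) ^ 2 := by gcongr; linarith
      have : 0 ≤ K * r ^ 2 := by positivity
      nlinarith

end Good

/-! ### The regularised function -/

def kB (x : ℝ × ℂ) : ℝ := kE x - kE (0, x.2)

def kZ (x : ℝ × ℂ) : ℝ := kT (0, x.2)

lemma kB_contDiff : ContDiff ℝ (⊤ : ℕ∞) kB :=
  kE_contDiff.sub (kE_contDiff.comp (contDiff_const.prodMk contDiff_snd))

lemma kZ_contDiff : ContDiff ℝ (⊤ : ℕ∞) kZ :=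
  kT_contDiff.comp (contDiff_const.prodMk contDiff_snd)

namespace Good

variable {μ : Measure ℂ} {ρ : ℂ → ℝ} {D : ℝ}

lemma supp_kB (h : Good μ ρ D) : SuppCond (u0 ρ) kB := h.supp_of fun u w h1 hw => by
  have h2 : 1 ≤ Real.exp 0 * ‖w‖ ^ 2 := by
    rw [Real.exp_zero, one_mul]; exact one_le_pow₀ h1
  simp only [kB]
  rw [kE_far hw, kE_far h2, sub_self]

lemma supp_kZ (h : Good μ ρ D) : SuppCond (u0 ρ) kZ := h.supp_of fun u w h1 hw => by
  have h2 : 1 ≤ Real.exp 0 * ‖w‖ ^ 2 := by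
    rw [Real.exp_zero, one_mul]; exact one_le_pow₀ h1
  simp only [kZ]
  rw [kT_far h2]

/-- The regularised function. -/
def reg (φ : ℂ → ℝ) (μ : Measure ℂ) (ρ : ℂ → ℝ) (z : ℂ) : ℝ :=
  I0⁻¹ * ((∫ ζ, φ ζ • kZ (u0 ρ ζ, z - ζ)) + ∫ ζ, (1:ℝ) • kB (u0 ρ ζ, z - ζ) ∂μ)

variable {φ : ℂ → ℝ}

lemma reg_contDiff (h : Good μ ρ D) (hφ : Continuous φ) : ContDiff ℝ (⊤ : ℕ∞) (reg φ μ ρ) :=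
  have := h.finC
  contDiff_const.mul ((param_contDiff h.u0_continuous hφ kZ_contDiff h.supp_kZ).add
    (param_contDiff h.u0_continuous continuous_const kB_contDiff h.supp_kB))

lemma kT_slice2 (u : ℝ) (z : ℂ) : ContDiff ℝ (⊤ : ℕ∞) (fun ζ => kT (u, z - ζ)) :=
  kT_contDiff.comp (contDiff_const.prodMk (contDiff_const.sub contDiff_id))

lemma kE_slice2 (u : ℝ) (z : ℂ) : ContDiff ℝ (⊤ : ℕ∞) (fun ζ => kE (u, z - ζ)) :=
  kE_contDiff.comp (contDiff_const.prodMk (contDiff_const.sub contDiff_id))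

lemma lap_reg (h : Good μ ρ D) (hφ : HasDoublingLaplacian φ μ) :
    lap (reg φ μ ρ) = fun z => I0⁻¹ * T μ ρ z := by
  have := h.finC
  ext z
  have c1 := param_contDiff (μ := volume) h.u0_continuous hφ.continuous kZ_contDiff h.supp_kZ
  have c2 := param_contDiff (μ := μ) h.u0_continuous (continuous_const (y := (1:ℝ)))
    kB_contDiff h.supp_kB
  have e1 := lap_const_mul (c1.add c2) I0⁻¹ z
  have e2 := lap_add c1 c2 z
  have e3 : lap (reg φ μ ρ) z = _ := e1
  rw [e3]
  congr 1
  refine e2.trans ?_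
  rw [param_lap h.u0_continuous hφ.continuous kZ_contDiff h.supp_kZ,
    param_lap h.u0_continuous continuous_const kB_contDiff h.supp_kB]
  have e4 : ∀ ζ, lap (fun z => kZ (u0 ρ ζ, z - ζ)) z = lap (fun ζ => kT (0, z - ζ)) ζ :=
    fun ζ => lap_kT_symm 0 ζ z
  have e5 : ∀ ζ, lap (fun z => kB (u0 ρ ζ, z - ζ)) z = kT (u0 ρ ζ, z - ζ) - kT (0, z - ζ) := by
    intro ζ
    have := lap_sub (slice_contDiff kE_contDiff (u0 ρ ζ) ζ) (slice_contDiff kE_contDiff 0 ζ) z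
    rw [lap_kE, lap_kE] at this
    exact this
  simp only [e4, e5]
  rw [hφ.lap_eq _ (kT_slice2 0 z) (kT_compact 0 z)]
  have i1 := supp_integrable (μ := μ) kT_contDiff.continuous h.u0_continuous
    (continuous_const (y := (1:ℝ))) h.supp_kT z
  have i2 : Integrable (fun ζ => kT (0, z - ζ)) μ :=
    (kT_slice2 0 z).continuous.integrable_of_hasCompactSupport (kT_compact 0 z)
  simp only [one_smul] at i1
  simp only [one_mul]
  rw [integral_sub i1 i2, T]
  simp only [one_smul]
  ring

lemma avg_bound (hφ : Continuous φ) {z : ℂ} {s : ℝ} (hs : 0 < s)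
    (hz : ∀ ζ, ‖z - ζ‖ < s → |φ ζ - φ z| ≤ 1) :
    |I0⁻¹ * (∫ ζ, φ ζ * kT (-2 * Real.log s, z - ζ)) - φ z| ≤ 1 := by
  have hI := I0_pos
  set v := -2 * Real.log s with hv
  have hk := (kT_slice2 v z).continuous
  have i1 : Integrable (fun ζ => φ ζ * kT (v, z - ζ)) :=
    (hφ.mul hk).integrable_of_hasCompactSupport ((kT_compact v z).mul_left)
  have i2 : Integrable (fun ζ => kT (v, z - ζ)) :=
    hk.integrable_of_hasCompactSupport (kT_compact v z)
  have hone : ∫ ζ, kT (v, z - ζ) = I0 := by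
    rw [← kT_integral_left v z]
    exact integral_congr_ae (Eventually.of_forall fun ζ => kT_symm v z ζ)
  have e : I0⁻¹ * (∫ ζ, φ ζ * kT (v, z - ζ)) - φ z =
      I0⁻¹ * ∫ ζ, (φ ζ - φ z) * kT (v, z - ζ) := by
    have : (fun ζ => (φ ζ - φ z) * kT (v, z - ζ)) =
        fun ζ => φ ζ * kT (v, z - ζ) - φ z * kT (v, z - ζ) := by ext; ring
    rw [this, integral_sub i1 (i2.const_mul _), integral_const_mul, hone]
    field_simp
  rw [e, abs_mul, abs_of_pos (by positivity : 0 < I0⁻¹), inv_mul_le_iff₀ hI, mul_one, ← hone]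
  rw [← Real.norm_eq_abs]
  refine norm_integral_le_of_norm_le i2 (Eventually.of_forall fun ζ => ?_)
  rw [norm_mul, Real.norm_eq_abs, Real.norm_of_nonneg (kT_nonneg _)]
  rcases lt_or_ge ‖z - ζ‖ s with h1 | h1
  · exact mul_le_of_le_one_left (kT_nonneg _) (hz ζ h1)
  · have : kT (v, z - ζ) = 0 := by
      apply kT_far
      rw [hv, show -2 * Real.log s = -(Real.log s + Real.log s) by ring,
        Real.exp_neg, Real.exp_add, Real.exp_log hs, ← sq, inv_mul_eq_div,
        one_le_div (by positivity)]
      gcongr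
    rw [this]; simp

lemma diff_pointwise (h : Good μ ρ D) {M : ℝ} (hM1 : 1 ≤ M)
    (hM : ∀ x, 0 ≤ x → x ≤ 1 → |prl x| ≤ M) {z : ℂ} {s : ℝ} (hs : 0 < s) (hsz : s ≤ ρ z / 16)
    (ζ : ℂ) : |kE (u0 ρ ζ, z - ζ) - kE (-2 * Real.log s, z - ζ)| ≤
      (ball z (ρ z)).indicator (fun _ => M) ζ + max 0 (Real.log (ρ z / max ‖z - ζ‖ s)) := by
  have hz := h.rpos z
  have h1 := h.rho_le z ζ
  have h2 := h.rho_le ζ z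
  rw [norm_sub_rev] at h2
  have hM0 : 0 ≤ M := by linarith
  have hi0 : 0 ≤ (ball z (ρ z)).indicator (fun _ => M) ζ := indicator_nonneg (fun _ _ => hM0) _
  rcases lt_or_ge ‖z - ζ‖ (ρ z / 2) with hw | hw
  · have h3 := kE_diff_bound hM1 hM (t := ρ ζ / 8) (R := ρ z) hs (by linarith) (by linarith)
      (w := z - ζ)
    refine h3.trans ?_
    gcongr
    have : ζ ∈ ball z (ρ z) := by
      rw [mem_ball, dist_eq_norm, norm_sub_rev]; linarith
    rw [indicator_of_mem this]
    split_ifs <;> linarith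
  · rw [kE_far (h.far_iff (by linarith)), kE_far, sub_self, abs_zero]
    · positivity
    · rw [show -2 * Real.log s = -(Real.log s + Real.log s) by ring,
        Real.exp_neg, Real.exp_add, Real.exp_log hs, ← sq, inv_mul_eq_div,
        one_le_div (by positivity)]
      gcongr
      linarith

lemma diff_integral (h : Good μ ρ D) {M : ℝ} (hM1 : 1 ≤ M)
    (hM : ∀ x, 0 ≤ x → x ≤ 1 → |prl x| ≤ M) {z : ℂ} {s : ℝ} (hs : 0 < s) (hsz : s ≤ ρ z / 16) :
    |∫ ζ, (kE (u0 ρ ζ, z - ζ) - kE (-2 * Real.log s, z - ζ)) ∂μ| ≤ M + D ^ 3 := by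
  have hD := h.one_le
  rw [← Real.norm_eq_abs]
  refine (norm_integral_le_lintegral_norm _).trans ?_
  refine ENNReal.toReal_le_of_le_ofReal (by positivity) ?_
  have hμ : μ (ball z (ρ z)) = 1 := by
    rw [← ENNReal.ofReal_toReal (h.fin z (ρ z)).ne]
    have := h.rone z
    rw [Measure.real] at this
    rw [this, ENNReal.ofReal_one]
  calc ∫⁻ ζ, ENNReal.ofReal ‖kE (u0 ρ ζ, z - ζ) - kE (-2 * Real.log s, z - ζ)‖ ∂μ
      ≤ ∫⁻ ζ, ((ball z (ρ z)).indicator (fun _ => ENNReal.ofReal M) ζ +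
          ENNReal.ofReal (Real.log (ρ z / max ‖z - ζ‖ s))) ∂μ := by
        refine lintegral_mono fun ζ => ?_
        refine (ENNReal.ofReal_le_ofReal (h.diff_pointwise hM1 hM hs hsz ζ)).trans ?_
        refine ENNReal.ofReal_add_le.trans ?_
        refine add_le_add ?_ ?_
        · by_cases hζ : ζ ∈ ball z (ρ z)
          · rw [indicator_of_mem hζ, indicator_of_mem hζ]
          · rw [indicator_of_notMem hζ, indicator_of_notMem hζ]; simp
        · rcases le_total 0 (Real.log (ρ z / max ‖z - ζ‖ s)) with h1 | h1
          · rw [max_eq_right h1]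
          · rw [max_eq_left h1]; simp
    _ = ENNReal.ofReal M + ∫⁻ ζ, ENNReal.ofReal (Real.log (ρ z / max ‖z - ζ‖ s)) ∂μ := by
        rw [lintegral_add_left (measurable_const.indicator measurableSet_ball),
          lintegral_indicator_const measurableSet_ball, hμ, mul_one]
    _ ≤ ENNReal.ofReal M + ENNReal.ofReal (D ^ 3) := by
        gcongr
        exact h.log_integral z hs
    _ = _ := (ENNReal.ofReal_add (by linarith) (by positivity)).symm

lemma reg_bound (h : Good μ ρ D) (hφ : HasDoublingLaplacian φ μ) {M : ℝ} (hM1 : 1 ≤ M)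
    (hM : ∀ x, 0 ≤ x → x ≤ 1 → |prl x| ≤ M) (z : ℂ) :
    |reg φ μ ρ z - φ z| ≤ 1 + I0⁻¹ * (M + D ^ 3) := by
  have := h.finC
  have hI := I0_pos
  have hz := h.rpos z
  obtain ⟨δ, hδ, hδ1⟩ := Metric.continuous_iff.1 hφ.continuous z 1 one_pos
  set s := min δ (ρ z / 16) with hs
  have hs0 : 0 < s := lt_min hδ (by positivity)
  have a1 := avg_bound hφ.continuous (z := z) hs0 (fun ζ hζ => by
    have := hδ1 ζ (by
      rw [dist_eq_norm, norm_sub_rev]; exact hζ.trans_le (min_le_left _ _))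
    rw [Real.dist_eq] at this
    exact this.le)
  have a2 := h.diff_integral hM1 hM (z := z) hs0 (min_le_right _ _)
  set v := -2 * Real.log s with hv
  have e1 := hφ.lap_eq (fun ζ => kE (0, z - ζ) - kE (v, z - ζ))
    ((kE_slice2 0 z).sub (kE_slice2 v z)) (kE_sub_compact 0 v z)
  have e2 : ∀ ζ, lap (fun ζ => kE (0, z - ζ) - kE (v, z - ζ)) ζ =
      kT (0, z - ζ) - kT (v, z - ζ) := by
    intro ζ
    have e3 : (fun ζ => kE (0, z - ζ) - kE (v, z - ζ)) =
        fun ζ => kE (0, ζ - z) - kE (v, ζ - z) := by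
      ext ζ; rw [kE_symm 0, kE_symm v]
    rw [e3, lap_sub (slice_contDiff kE_contDiff 0 z) (slice_contDiff kE_contDiff v z), lap_kE,
      lap_kE, kT_symm 0, kT_symm v]
  have ik : ∀ u, Integrable (fun ζ => φ ζ * kT (u, z - ζ)) := fun u =>
    (hφ.continuous.mul (kT_slice2 u z).continuous).integrable_of_hasCompactSupport
      ((kT_compact u z).mul_left)
  simp only [e2, mul_sub] at e1
  rw [integral_sub (ik 0) (ik v)] at e1
  have iB := supp_integrable (μ := μ) kB_contDiff.continuous h.u0_continuous
    (continuous_const (y := (1:ℝ))) h.supp_kB z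
  have i3 : Integrable (fun ζ => kE (0, z - ζ) - kE (v, z - ζ)) μ :=
    ((kE_slice2 0 z).sub (kE_slice2 v z)).continuous.integrable_of_hasCompactSupport
      (kE_sub_compact 0 v z)
  have e4 : ∫ ζ, (kE (u0 ρ ζ, z - ζ) - kE (v, z - ζ)) ∂μ =
      (∫ ζ, (1:ℝ) • kB (u0 ρ ζ, z - ζ) ∂μ) + ∫ ζ, (kE (0, z - ζ) - kE (v, z - ζ)) ∂μ := by
    rw [← integral_add iB i3]
    refine integral_congr_ae (Eventually.of_forall fun ζ => ?_)
    simp only [kB, one_smul]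
    ring
  have e5 : reg φ μ ρ z - φ z = (I0⁻¹ * (∫ ζ, φ ζ * kT (v, z - ζ)) - φ z) +
      I0⁻¹ * ∫ ζ, (kE (u0 ρ ζ, z - ζ) - kE (v, z - ζ)) ∂μ := by
    rw [e4, ← e1, reg]
    simp only [kZ, smul_eq_mul]
    ring
  rw [e5]
  refine (abs_add_le _ _).trans (add_le_add a1 ?_)
  rw [abs_mul, abs_of_pos (by positivity : 0 < I0⁻¹)]
  gcongr

end Good

/-- Regularisation of `φ`: there is a smooth subharmonic `ψ` with `|ψ - φ|` bounded,
whose (pointwise) Laplacian is a doubling measure comparable to `ρ_ψ⁻²` and to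
`ρ_φ⁻²`, and with `|∇(Δψ)| ≲ ρ_φ⁻³`. -/
theorem regularisation
    (φ : ℂ → ℝ) (μ : Measure ℂ) (hφ : HasDoublingLaplacian φ μ)
    (ρ : ℂ → ℝ) (hρ : IsRadius μ ρ) :
    ∃ ψ : ℂ → ℝ, ∃ C : ℝ, 0 < C ∧
      ContDiff ℝ (⊤ : ℕ∞) ψ ∧
      (∀ z, 0 ≤ lap ψ z) ∧
      (∀ z, |ψ z - φ z| ≤ C) ∧
      (∃ Cd : ℝ≥0, 0 < Cd ∧
        IsDoubling (volume.withDensity fun z => ENNReal.ofReal (lap ψ z)) Cd) ∧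
      (∃ ρψ : ℂ → ℝ,
        IsRadius (volume.withDensity fun z => ENNReal.ofReal (lap ψ z)) ρψ ∧
        (∀ z, C⁻¹ * (ρψ z ^ 2)⁻¹ ≤ lap ψ z ∧ lap ψ z ≤ C * (ρψ z ^ 2)⁻¹)) ∧
      (∀ z, C⁻¹ * (ρ z ^ 2)⁻¹ ≤ lap ψ z ∧ lap ψ z ≤ C * (ρ z ^ 2)⁻¹) ∧
      (∀ z, ‖fderiv ℝ (lap ψ) z‖ ≤ C * (ρ z ^ 3)⁻¹) := by
  obtain ⟨C₀, -, hC₀⟩ := hφ.doubling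
  obtain ⟨D, h⟩ := exists_good hC₀ hρ
  obtain ⟨M, hM1, hMl, hMp, hMd⟩ := profile_bound
  have hI := I0_pos
  have hD := h.one_le
  have hD0 : 0 < D := by linarith
  have hM0 : 0 < M := by linarith
  have hl := h.lap_reg hφ
  set K := I0⁻¹ * 162 * M with hKdef
  set k := I0⁻¹ * (100 / D ^ 4) with hkdef
  set G := I0⁻¹ * 30000 * M with hGdef
  have hK0 : 0 < K := by positivity
  have hk0 : 0 < k := by positivity
  have hG0 : 0 < G := by positivity
  have hK : ∀ z, I0⁻¹ * Good.T μ ρ z ≤ K * (ρ z ^ 2)⁻¹ := fun z => by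
    have := mul_le_mul_of_nonneg_left (h.T_upper hM1 hMp z) (inv_pos.2 hI).le
    calc _ ≤ _ := this
      _ = _ := by rw [hKdef]; ring
  have hk : ∀ z, k * (ρ z ^ 2)⁻¹ ≤ I0⁻¹ * Good.T μ ρ z := fun z => by
    have := mul_le_mul_of_nonneg_left (h.T_lower z) (inv_pos.2 hI).le
    calc _ = _ := by rw [hkdef]; ring
      _ ≤ _ := this
  set A := 1 + I0⁻¹ * (M + D ^ 3) with hA
  have hA0 : 0 < A := by positivity
  set C := A + 16 * K + K + (4 + 16 * K) / k + 1 / k + G with hC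
  have hq1 : 0 < (4 + 16 * K) / k := by positivity
  have hq2 : 0 < 1 / k := by positivity
  have hC0 : 0 < C := by positivity
  have hCk : C⁻¹ ≤ k := by
    rw [inv_le_comm₀ hC0 hk0, ← one_div]; linarith
  have hCk' : C⁻¹ ≤ k / (4 + 16 * K) := by
    rw [inv_le_comm₀ hC0 (by positivity), inv_div]; linarith
  have hnu : (volume.withDensity fun z => ENNReal.ofReal (lap (Good.reg φ μ ρ) z)) =
      Good.nu μ ρ := by rw [hl]; rfl
  refine ⟨Good.reg φ μ ρ, C, hC0, h.reg_contDiff hφ.continuous, ?_, ?_, ?_, ?_, ?_, ?_⟩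
  · intro z
    rw [hl]
    refine le_trans ?_ (hk z)
    positivity
  · intro z
    have := h.reg_bound hφ hM1 hMl z
    linarith
  · rw [hnu]; exact h.nu_doubling hK0 hk0 hK hk
  · rw [hnu]
    choose r hr hr1 using h.nu_radius
    refine ⟨r, fun z => ⟨hr z, hr1 z⟩, fun z => ?_⟩
    obtain ⟨b1, b2⟩ := h.nu_radius_cmp hK0 hK (hr z) (hr1 z)
    have hz := h.rpos z
    have hrz := hr z
    rw [hl]
    constructor
    · refine le_trans ?_ (hk z)
      have b3 : ((4 + 16 * K) * r z ^ 2)⁻¹ ≤ (ρ z ^ 2)⁻¹ := by gcongr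
      calc C⁻¹ * (r z ^ 2)⁻¹ ≤ k / (4 + 16 * K) * (r z ^ 2)⁻¹ := by gcongr
        _ = k * ((4 + 16 * K) * r z ^ 2)⁻¹ := by rw [mul_inv]; ring
        _ ≤ _ := by gcongr
    · refine (hK z).trans ?_
      have b4 : (r z / 4) ^ 2 ≤ ρ z ^ 2 := by gcongr; linarith
      have b5 : (ρ z ^ 2)⁻¹ ≤ ((r z / 4) ^ 2)⁻¹ := by gcongr
      calc K * (ρ z ^ 2)⁻¹ ≤ K * ((r z / 4) ^ 2)⁻¹ := by gcongr
        _ = 16 * K * (r z ^ 2)⁻¹ := by field_simp; norm_num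
        _ ≤ _ := by gcongr; linarith
  · intro z
    have hz := h.rpos z
    rw [hl]
    constructor
    · refine le_trans ?_ (hk z)
      gcongr
    · refine (hK z).trans ?_
      gcongr
      linarith
  · intro z
    have hz := h.rpos z
    rw [hl]
    have hd : DifferentiableAt ℝ (Good.T μ ρ) z :=
      (h.T_contDiff.differentiable (by simp)).differentiableAt
    rw [fderiv_const_mul hd, norm_smul, Real.norm_of_nonneg (inv_pos.2 hI).le]
    have := mul_le_mul_of_nonneg_left (h.T_grad hM1 hMd z) (inv_pos.2 hI).le
    calc _ ≤ _ := this
      _ = G * (ρ z ^ 3)⁻¹ := by rw [hGdef]; ring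
      _ ≤ _ := by gcongr; linarith

end
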